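/- There exist constants C > 0 and T₀ > 0 such that for all T ≥ T₀, all H ∈ (0, T^{1/4}], and all t ∈ [T, T + H], setting P₀ = √(T/(2π)), one has |Z'(t) + 2 · Σ_{n < P₀} n^{-1/2} · ln(P₀/n) · sin(ϑ(t) - t·ln n)| ≤ C · T^{-1/4} · ln T, where the sum runs over positive integers n with n < P₀ and Z' is the derivative of the Hardy function Z. -/

import Mathlib

/-!
Let `R_N(s)` be the integral of `x⁻ˢ e^{iπx²} / (e^{iπx} - e^{-iπx})` along the line of slope `1`
through `N + 1/2`. The Mellin transform of Mordell's integral gives Riemann's form of the functional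
equation, which on the critical line reads `Z(t) = -2 Re (e^{iϑ(t)} R_0(1/2 + it))`. Moving the line
across the poles `1, …, N` collects the residues `n⁻ˢ`, so that
`Z(t) = 2 Re (e^{iϑ(t)} (∑_{n ≤ N} n⁻ˢ - R_N(s)))` with `s = 1/2 + it`.

Differentiating the sum gives `-2 ∑ n^{-1/2} (ϑ'(t) - ln n) sin(ϑ(t) - t ln n)`, where Stirling's
formula for the digamma function replaces `ϑ'(t)` by `ln P₀` up to `O(T^{-3/4})`. For
`N < P₀ ≤ N + 1` the line through `N + 1/2` is close to the path of steepest descent, so `R_N` and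
`R_N'` are `O(T^{-1/4})` and `O(T^{-1/4} ln T)`.
-/

open Filter

/-- The Riemann–Siegel theta function
`ϑ(t) = -(t/2)·ln π + Im(log Γ(1/4 + i t/2))`. -/
noncomputable def riemannSiegelTheta (t : ℝ) : ℝ :=
  -(t / 2) * Real.log Real.pi +
    (Complex.log (Complex.Gamma (1 / 4 + Complex.I * ((t : ℂ) / 2)))).im

/-- The Hardy function `Z(t) = e^{iϑ(t)} ζ(1/2 + it)`, which is real-valued
for real `t` (formalized by taking the real part). -/
noncomputable def hardyZ (t : ℝ) : ℝ :=
  (Complex.exp (Complex.I * (riemannSiegelTheta t : ℂ)) *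
    riemannZeta (1 / 2 + Complex.I * (t : ℂ))).re

namespace RiemannSiegel

open Complex MeasureTheory Set Filter Topology
open scoped ComplexConjugate

/-! ### Moving lines of integration -/

theorem integrable_of_norm_le_exp_neg_sq {E : Type*} [NormedAddCommGroup E] {g : ℝ → E} {C V : ℝ}
    (hg : Continuous g) (hb : ∀ v, V ≤ |v| → ‖g v‖ ≤ C * Real.exp (-v ^ 2)) : Integrable g := by
  refine hg.locallyIntegrable.integrable_of_isBigO_cocompact
    (g := fun v => Real.exp (-1 * v ^ 2)) (Asymptotics.IsBigO.of_bound C ?_)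
    ((integrable_exp_neg_mul_sq one_pos).integrableAtFilter _)
  filter_upwards [(tendsto_norm_cocompact_atTop (E := ℝ)).eventually_ge_atTop V] with v hv
  simpa [abs_of_pos (Real.exp_pos _)] using hb v hv

theorem tendsto_integral_vertical_segment {h : ℂ → ℂ} {y₁ y₂ V : ℝ} {B : ℝ → ℝ} {l : Filter ℝ}
    (hy : y₁ ≤ y₂) (hl : Tendsto (fun R : ℝ => |R|) l atTop) (hB : Tendsto B atTop (𝓝 0))
    (hb : ∀ v, V ≤ |v| → ∀ y ∈ Icc y₁ y₂, ‖h (v + y * I)‖ ≤ B |v|) :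
    Tendsto (fun R : ℝ => ∫ y in y₁..y₂, h (R + y * I)) l (𝓝 0) := by
  refine squeeze_zero_norm' (a := fun R => B |R| * |y₂ - y₁|) ?_
    (by simpa using (hB.comp hl).mul_const |y₂ - y₁|)
  filter_upwards [hl.eventually_ge_atTop V] with R hR
  refine intervalIntegral.norm_integral_le_of_norm_le_const fun y hyy => ?_
  rw [uIoc_of_le hy] at hyy
  exact hb R hR y (Ioc_subset_Icc_self hyy)

theorem integral_horizontal_line_eq {h : ℂ → ℂ} {y₁ y₂ V : ℝ} {B : ℝ → ℝ} (hy : y₁ ≤ y₂)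
    (hc : ContinuousOn h (im ⁻¹' Icc y₁ y₂)) (hd : DifferentiableOn ℂ h (im ⁻¹' Ioo y₁ y₂))
    (h₁ : Integrable fun v : ℝ => h (v + y₁ * I)) (h₂ : Integrable fun v : ℝ => h (v + y₂ * I))
    (hB : Tendsto B atTop (𝓝 0))
    (hb : ∀ v, V ≤ |v| → ∀ y ∈ Icc y₁ y₂, ‖h (v + y * I)‖ ≤ B |v|) :
    ∫ v : ℝ, h (v + y₁ * I) = ∫ v : ℝ, h (v + y₂ * I) := by
  have cauchy : ∀ R : ℝ,
      (∫ v in (-R)..R, h (v + y₁ * I)) - (∫ v in (-R)..R, h (v + y₂ * I)) =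
        -(I * ∫ y in y₁..y₂, h (R + y * I)) + I * ∫ y in y₁..y₂, h ((-R : ℝ) + y * I) := by
    intro R
    have := integral_boundary_rect_eq_zero_of_continuousOn_of_differentiableOn h
      ((-R : ℝ) + y₁ * I) ((R : ℝ) + y₂ * I)
      (hc.mono fun z hz => by simpa [uIcc_of_le hy] using hz.2)
      (hd.mono fun z hz => by simpa [hy] using hz.2)
    simp only [add_re, add_im, ofReal_re, ofReal_im, mul_re, mul_im, I_re, I_im, mul_zero, mul_one,
      sub_zero, add_zero, zero_add, smul_eq_mul] at this
    linear_combination this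
  have left := tendsto_integral_vertical_segment hy tendsto_abs_atTop_atTop hB hb
  have right := (tendsto_integral_vertical_segment hy tendsto_abs_atBot_atTop hB hb).comp
    tendsto_neg_atTop_atBot
  have sides := (left.const_mul I).neg.add (right.const_mul I)
  simp only [mul_zero, neg_zero, add_zero] at sides
  refine sub_eq_zero.mp (tendsto_nhds_unique
    ((intervalIntegral_tendsto_integral h₁ tendsto_neg_atTop_atBot tendsto_id).sub
      (intervalIntegral_tendsto_integral h₂ tendsto_neg_atTop_atBot tendsto_id)) ?_)
  exact sides.congr fun R => (cauchy R).symm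

/-- The point with parameter `v` on the line of slope `1` crossing the real axis at `c`. -/
noncomputable def slantLine (c v : ℝ) : ℂ := c + (1 + I) * v

@[simp] theorem slantLine_re (c v : ℝ) : (slantLine c v).re = c + v := by simp [slantLine]

@[simp] theorem slantLine_im (c v : ℝ) : (slantLine c v).im = v := by simp [slantLine]

@[fun_prop]
theorem continuous_slantLine (c : ℝ) : Continuous (slantLine c) := by unfold slantLine; fun_prop

theorem slantLine_add_one (c v : ℝ) : slantLine (c + 1) v = slantLine c v + 1 := by
  unfold slantLine; push_cast; ring

theorem norm_slantLine_le (c v : ℝ) : ‖slantLine c v‖ ≤ |c| + 2 * |v| := by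
  have h := norm_le_abs_re_add_abs_im (slantLine c v)
  rw [slantLine_re, slantLine_im] at h
  linarith [abs_add_le c v]

/-- The contour integral of `h` along the line of slope `1` crossing the real axis at `c`. -/
noncomputable def slantIntegral (h : ℂ → ℂ) (c : ℝ) : ℂ := ∫ v : ℝ, (1 + I) * h (slantLine c v)

theorem one_add_I_mul_add_mul_I (v y : ℝ) :
    (1 + I) * (v + y * I) = slantLine (-2 * y) (v + y) := by
  unfold slantLine
  push_cast
  linear_combination (y : ℂ) * I_sq

theorem one_add_I_mul_re_sub_im (z : ℂ) : ((1 + I) * z).re - ((1 + I) * z).im = -2 * z.im := by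
  simp only [mul_re, mul_im, add_re, add_im, one_re, one_im, I_re, I_im]
  ring

theorem comp_one_add_I_mul_eq_comp_slantLine (h : ℂ → ℂ) (c : ℝ) :
    (fun v : ℝ => h ((1 + I) * (v + (-c / 2 : ℝ) * I))) =
      fun v : ℝ => h (slantLine c (v + -c / 2)) := by
  funext v
  rw [one_add_I_mul_add_mul_I]
  congr 2
  ring

theorem slantIntegral_eq_integral_horizontal_line (h : ℂ → ℂ) (c : ℝ) :
    slantIntegral h c = (1 + I) * ∫ v : ℝ, h ((1 + I) * (v + (-c / 2 : ℝ) * I)) := by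
  rw [comp_one_add_I_mul_eq_comp_slantLine,
    integral_add_right_eq_self (fun v => h (slantLine c v)), ← integral_const_mul]
  rfl

theorem norm_comp_slantLine_add_le {h : ℂ → ℂ} {c v y A C V : ℝ}
    (hb : ∀ v, V ≤ |v| → ‖h (slantLine c v)‖ ≤ C * Real.exp (-v ^ 2)) (hy : |y| ≤ A)
    (hv : |V| + A ≤ |v|) : ‖h (slantLine c (v + y))‖ ≤ C * Real.exp (-(|v| - A) ^ 2) := by
  have sub_le : |v| - A ≤ |v + y| := by linarith [abs_sub_abs_le_abs_add v y]
  have bound := hb (v + y) (by linarith [le_abs_self V])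
  have C_nonneg : 0 ≤ C := nonneg_of_mul_nonneg_left ((norm_nonneg _).trans bound) (Real.exp_pos _)
  refine bound.trans (mul_le_mul_of_nonneg_left (Real.exp_le_exp.mpr ?_) C_nonneg)
  rw [neg_le_neg_iff, ← sq_abs (v + y)]
  exact pow_le_pow_left₀ (by linarith [abs_nonneg V]) sub_le 2

theorem tendsto_const_mul_exp_neg_sub_sq (C A : ℝ) :
    Tendsto (fun v : ℝ => C * Real.exp (-(v - A) ^ 2)) atTop (𝓝 0) := by
  have shift : Tendsto (fun v : ℝ => v - A) atTop atTop :=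
    tendsto_atTop_add_const_right _ _ tendsto_id
  simpa using (Real.tendsto_exp_atBot.comp (tendsto_neg_atTop_atBot.comp
    ((tendsto_pow_atTop two_ne_zero).comp shift))).const_mul C

theorem slantIntegral_eq_of_differentiableOn {h : ℂ → ℂ} {a b C V : ℝ} (hab : a ≤ b)
    (hc : ContinuousOn h {x | x.re - x.im ∈ Icc a b})
    (hd : DifferentiableOn ℂ h {x | x.re - x.im ∈ Ioo a b})
    (hb : ∀ c ∈ Icc a b, ∀ v, V ≤ |v| → ‖h (slantLine c v)‖ ≤ C * Real.exp (-v ^ 2)) :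
    slantIntegral h a = slantIntegral h b := by
  have integrable : ∀ c ∈ Icc a b,
      Integrable fun v : ℝ => h ((1 + I) * (v + (-c / 2 : ℝ) * I)) := fun c hcab => by
    rw [comp_one_add_I_mul_eq_comp_slantLine]
    exact (integrable_of_norm_le_exp_neg_sq (hc.comp_continuous (continuous_slantLine c)
      fun v => by simpa using hcab) (hb c hcab)).comp_add_right _
  rw [slantIntegral_eq_integral_horizontal_line, slantIntegral_eq_integral_horizontal_line]
  congr 1
  refine (integral_horizontal_line_eq (h := fun z => h ((1 + I) * z))
    (V := |V| + (|a| + |b|)) (by linarith)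
    (hc.comp (by fun_prop) fun z hz => ?_) (hd.comp (by fun_prop) fun z hz => ?_)
    (integrable b ⟨hab, le_rfl⟩) (integrable a ⟨le_rfl, hab⟩)
    (tendsto_const_mul_exp_neg_sub_sq C (|a| + |b|)) fun v hv y hy => ?_).symm
  · rw [mem_ofPred_eq, one_add_I_mul_re_sub_im]
    exact ⟨by linarith [hz.2], by linarith [hz.1]⟩
  · rw [mem_ofPred_eq, one_add_I_mul_re_sub_im]
    exact ⟨by linarith [hz.2], by linarith [hz.1]⟩
  · have abs_y_le : |y| ≤ |a| + |b| := by
      rw [abs_le]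
      constructor <;>
        linarith [hy.1, hy.2, le_abs_self b, neg_abs_le a, abs_nonneg a, abs_nonneg b]
    rw [one_add_I_mul_add_mul_I]
    exact norm_comp_slantLine_add_le (hb _ ⟨by linarith [hy.2], by linarith [hy.1]⟩) abs_y_le hv

/-! ### Mordell's integral -/

/-- The denominator `e^{iπx} - e^{-iπx} = 2i sin(πx)` of Riemann's kernel. -/
noncomputable def kernelDenom (x : ℂ) : ℂ := 2 * I * sin (Real.pi * x)

/-- Riemann's kernel `e^{iπx²} / (e^{iπx} - e^{-iπx})`. -/
noncomputable def kernel (x : ℂ) : ℂ := cexp (I * Real.pi * x ^ 2) / kernelDenom x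

theorem kernelDenom_eq_exp_sub_exp (x : ℂ) :
    kernelDenom x = cexp (I * Real.pi * x) - cexp (-(I * Real.pi * x)) := by
  unfold kernelDenom Complex.sin
  rw [show -(Real.pi * x) * I = -(I * Real.pi * x) by ring,
    show Real.pi * x * I = I * Real.pi * x by ring]
  linear_combination (cexp (-(I * Real.pi * x)) - cexp (I * Real.pi * x)) * I_sq

theorem differentiable_kernelDenom : Differentiable ℂ kernelDenom := by
  unfold kernelDenom; fun_prop

theorem kernelDenom_eq_zero_iff {x : ℂ} : kernelDenom x = 0 ↔ ∃ k : ℤ, x = k := by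
  have hπ : (Real.pi : ℂ) ≠ 0 := ofReal_ne_zero.mpr Real.pi_ne_zero
  simp only [kernelDenom, mul_eq_zero, OfNat.ofNat_ne_zero, I_ne_zero, or_self, false_or,
    Complex.sin_eq_zero_iff, mul_comm (Real.pi : ℂ), mul_left_inj' hπ]

theorem kernelDenom_intCast (m : ℤ) : kernelDenom m = 0 := kernelDenom_eq_zero_iff.mpr ⟨m, rfl⟩

theorem kernelDenom_add_one (x : ℂ) : kernelDenom (x + 1) = -kernelDenom x := by
  rw [kernelDenom, mul_add, mul_one, Complex.sin_add_pi, mul_neg, kernelDenom]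

theorem deriv_kernelDenom_intCast_ne_zero (m : ℤ) : deriv kernelDenom m ≠ 0 := by
  have h : HasDerivAt kernelDenom (2 * I * (cos (Real.pi * m) * Real.pi)) m := by
    have := ((hasDerivAt_id (m : ℂ)).const_mul (Real.pi : ℂ)).csin.const_mul (2 * I)
    rwa [mul_one] at this
  have hcos : cos (Real.pi * m) ≠ 0 := by
    intro h0
    have hsin : sin (Real.pi * (m : ℂ)) = 0 := by rw [mul_comm, Complex.sin_int_mul_pi]
    have := Complex.sin_sq_add_cos_sq (Real.pi * (m : ℂ))
    rw [h0, hsin] at this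
    norm_num at this
  rw [h.deriv]
  simp [hcos, Real.pi_ne_zero]

theorem kernelDenom_ne_zero_of_abs_sub_le {m : ℤ} {x : ℂ} (hx : x ≠ m)
    (h : |x.re - x.im - m| ≤ 1 / 2) : kernelDenom x ≠ 0 := by
  rw [Ne, kernelDenom_eq_zero_iff]
  rintro ⟨k, rfl⟩
  rw [intCast_re, intCast_im, sub_zero, ← Int.cast_sub, ← Int.cast_abs] at h
  have : |k - m| < 1 := by
    exact_mod_cast h.trans_lt (by norm_num : (1 / 2 : ℝ) < 1)
  exact hx (by rw [sub_eq_zero.mp (Int.abs_lt_one_iff.mp this)])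

theorem one_le_norm_kernelDenom_of_one_le_abs_im {x : ℂ} (h : 1 ≤ |x.im|) :
    1 ≤ ‖kernelDenom x‖ := by
  have exp_gap : ∀ w : ℝ, 1 ≤ w → 1 ≤ Real.exp (Real.pi * w) - Real.exp (-(Real.pi * w)) := by
    intro w hw
    have hπ := Real.pi_gt_three
    have := Real.add_one_le_exp (Real.pi * w)
    have : Real.exp (-(Real.pi * w)) ≤ 1 := Real.exp_le_one_iff.mpr (by nlinarith)
    nlinarith
  have key : |Real.exp (-(Real.pi * x.im)) - Real.exp (Real.pi * x.im)| ≤ ‖kernelDenom x‖ := by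
    have := abs_norm_sub_norm_le (cexp (I * Real.pi * x)) (cexp (-(I * Real.pi * x)))
    rw [← kernelDenom_eq_exp_sub_exp, norm_exp, norm_exp] at this
    simpa using this
  refine le_trans ?_ key
  rcases le_abs.mp h with h | h
  · rw [abs_sub_comm]
    exact (exp_gap _ h).trans (le_abs_self _)
  · have := exp_gap _ h
    rw [mul_neg, neg_neg] at this
    exact this.trans (le_abs_self _)

theorem one_le_norm_cos_add_mul_I (z : ℝ) : 1 ≤ ‖cos (z + z * I)‖ := by
  have sin_le_sinh : Real.sin z ^ 2 ≤ Real.sinh z ^ 2 := sq_le_sq.mpr <|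
    Real.abs_sin_le_abs.trans <| by
      rw [Real.abs_sinh]; exact Real.self_le_sinh_iff.mpr (abs_nonneg z)
  have norm_sq : ‖cos ((z : ℂ) + z * I)‖ ^ 2 = Real.cos z ^ 2 + Real.sinh z ^ 2 := by
    rw [Complex.cos_add_mul_I, ← normSq_eq_norm_sq, ← ofReal_cos, ← ofReal_cosh, ← ofReal_sin,
      ← ofReal_sinh, normSq_apply]
    simp only [sub_re, sub_im, mul_re, mul_im, ofReal_re, ofReal_im, I_re, I_im]
    linear_combination Real.cos z ^ 2 * Real.cosh_sq z +
      Real.sinh z ^ 2 * Real.sin_sq_add_cos_sq z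
  refine (one_le_sq_iff₀ (norm_nonneg _)).mp ?_
  rw [norm_sq]
  linarith [Real.sin_sq_add_cos_sq z]

theorem one_le_norm_kernelDenom_slantLine (n : ℕ) (v : ℝ) :
    1 ≤ ‖kernelDenom (slantLine (n + 1 / 2) v)‖ := by
  have shift : (Real.pi : ℂ) * slantLine (n + 1 / 2) v =
      ((Real.pi * v : ℝ) + (Real.pi * v : ℝ) * I) + Real.pi / 2 + n * Real.pi := by
    unfold slantLine
    push_cast
    ring
  rw [kernelDenom, shift, Complex.sin_antiperiodic.add_nat_mul_eq, Complex.sin_add_pi_div_two]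
  have := one_le_norm_cos_add_mul_I (Real.pi * v)
  simp only [norm_mul, norm_pow, norm_neg, norm_one, one_pow, one_mul, norm_I, mul_one,
    Complex.norm_ofNat]
  linarith

theorem kernelDenom_slantLine_ne_zero (n : ℕ) (v : ℝ) :
    kernelDenom (slantLine (n + 1 / 2) v) ≠ 0 :=
  norm_pos_iff.mp (one_pos.trans_le (one_le_norm_kernelDenom_slantLine n v))

theorem continuous_kernel_slantLine (n : ℕ) :
    Continuous fun v => kernel (slantLine (n + 1 / 2) v) :=
  (by fun_prop : Continuous fun v => cexp (I * Real.pi * slantLine (n + 1 / 2) v ^ 2)).div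
    (differentiable_kernelDenom.continuous.comp (continuous_slantLine _))
    (kernelDenom_slantLine_ne_zero n)

theorem norm_kernel_le {x : ℂ} (h : 1 ≤ ‖kernelDenom x‖) :
    ‖kernel x‖ ≤ Real.exp (-(2 * Real.pi * (x.re * x.im))) := by
  have hre : (I * Real.pi * x ^ 2).re = -(2 * Real.pi * (x.re * x.im)) := by
    rw [sq, mul_assoc, I_mul_re, im_ofReal_mul, mul_im]
    ring
  rw [kernel, norm_div, norm_exp, hre]
  exact div_le_self (Real.exp_pos _).le h

theorem kernel_neg (x : ℂ) : kernel (-x) = -kernel x := by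
  rw [kernel, kernelDenom, mul_neg, Complex.sin_neg, neg_sq, mul_neg, div_neg, kernel, kernelDenom]

theorem kernel_add_one (x : ℂ) : kernel (x + 1) = kernel x * cexp (2 * Real.pi * I * x) := by
  have numerator : cexp (I * Real.pi * (x + 1) ^ 2) =
      -(cexp (I * Real.pi * x ^ 2) * cexp (2 * Real.pi * I * x)) := by
    rw [← Complex.exp_add, show I * Real.pi * (x + 1) ^ 2 =
      (I * Real.pi * x ^ 2 + 2 * Real.pi * I * x) + Real.pi * I by ring,
      Complex.exp_add _ (Real.pi * I), exp_pi_mul_I, mul_neg_one]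
  rw [kernel, kernelDenom_add_one, numerator, neg_div_neg_eq, kernel, div_mul_eq_mul_div]

theorem kernel_mul_exp_sub_one {x : ℂ} (h : kernelDenom x ≠ 0) :
    kernel x * (cexp (2 * Real.pi * I * x) - 1) =
      cexp (I * Real.pi * x ^ 2 + I * Real.pi * x) := by
  rw [kernel, div_mul_eq_mul_div, div_eq_iff h, Complex.exp_add, mul_assoc (cexp _) (cexp _)]
  refine congrArg _ ?_
  rw [kernelDenom_eq_exp_sub_exp, mul_sub, ← Complex.exp_add, ← Complex.exp_add,
    ← Complex.exp_zero]
  congr 2 <;> ring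

/-- The constant in the Gaussian bound for a function of exponential type `a` times the kernel on
the lines `slantLine c`, `|c| ≤ R`. -/
noncomputable def decayConst (a R : ℝ) : ℝ :=
  Real.exp (a * R + (2 * a + 2 * Real.pi * R) ^ 2)

theorem norm_mul_kernel_slantLine_le {w : ℂ} {C a R c v : ℝ} (ha : 0 ≤ a) (hc : |c| ≤ R)
    (hw : ‖w‖ ≤ C * Real.exp (a * ‖slantLine c v‖)) (hD : 1 ≤ ‖kernelDenom (slantLine c v)‖) :
    ‖w * kernel (slantLine c v)‖ ≤ C * decayConst a R * Real.exp (-v ^ 2) := by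
  have hC : 0 ≤ C := nonneg_of_mul_nonneg_left ((norm_nonneg w).trans hw) (Real.exp_pos _)
  have exponent : a * ‖slantLine c v‖ + -(2 * Real.pi * ((c + v) * v)) ≤
      a * R + (2 * a + 2 * Real.pi * R) ^ 2 + -v ^ 2 := by
    have h1 := mul_le_mul_of_nonneg_left (norm_slantLine_le c v) ha
    have h2 := mul_le_mul_of_nonneg_left hc ha
    have h3 : -(c * v) ≤ R * |v| := (neg_le_abs _).trans <| by
      rw [abs_mul]; exact mul_le_mul_of_nonneg_right hc (abs_nonneg v)
    have h4 := mul_le_mul_of_nonneg_left h3 Real.pi_pos.le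
    have h5 := mul_le_mul_of_nonneg_right Real.pi_gt_three.le (sq_nonneg v)
    nlinarith [sq_abs v, sq_nonneg (2 * a + 2 * Real.pi * R - |v|), sq_nonneg (|v|),
      sq_nonneg (2 * a + 2 * Real.pi * R)]
  have hk := norm_kernel_le hD
  rw [slantLine_re, slantLine_im] at hk
  calc ‖w * kernel (slantLine c v)‖
      ≤ C * Real.exp (a * ‖slantLine c v‖) * Real.exp (-(2 * Real.pi * ((c + v) * v))) := by
        rw [norm_mul]; gcongr
    _ ≤ C * (decayConst a R * Real.exp (-v ^ 2)) := by
        rw [mul_assoc, decayConst, ← Real.exp_add, ← Real.exp_add]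
        gcongr
    _ = C * decayConst a R * Real.exp (-v ^ 2) := by ring

theorem integrable_mul_kernel {w : ℝ → ℂ} {C a : ℝ} (n : ℕ) (hw : Continuous w) (ha : 0 ≤ a)
    (hb : ∀ v, ‖w v‖ ≤ C * Real.exp (a * ‖slantLine (n + 1 / 2) v‖)) :
    Integrable fun v => w v * kernel (slantLine (n + 1 / 2) v) :=
  integrable_of_norm_le_exp_neg_sq (V := 0) (hw.mul (continuous_kernel_slantLine n)) fun v _ =>
    norm_mul_kernel_slantLine_le ha le_rfl (hb v) (one_le_norm_kernelDenom_slantLine n v)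

/-- The integral of `g` against Riemann's kernel along the line of slope `1` crossing the real axis
at `n + 1/2`. -/
noncomputable def kernelIntegral (g : ℂ → ℂ) (n : ℕ) : ℂ :=
  slantIntegral (fun x => g x * kernel x) (n + 1 / 2)

theorem norm_exp_neg_mul_le (x u : ℂ) : ‖cexp (-(x * u))‖ ≤ 1 * Real.exp (‖u‖ * ‖x‖) := by
  rw [one_mul, mul_comm ‖u‖, ← norm_mul, ← norm_neg (x * u)]
  exact norm_exp_le_exp_norm _

theorem integrable_exp_mul_kernel (u : ℂ) (n : ℕ) : Integrable fun v =>
    cexp (-(slantLine (n + 1 / 2) v * u)) * kernel (slantLine (n + 1 / 2) v) :=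
  integrable_mul_kernel n (by fun_prop) (norm_nonneg u) fun _ => norm_exp_neg_mul_le _ u

theorem one_add_I_eq_sqrt_two_mul_exp :
    (1 + I : ℂ) = (Real.sqrt 2 : ℝ) * cexp ((Real.pi / 4 : ℝ) * I) := by
  have h : ((Real.sqrt 2 : ℝ) : ℂ) * ((Real.sqrt 2 : ℝ) : ℂ) = 2 := by
    rw [← ofReal_mul, Real.mul_self_sqrt zero_le_two, ofReal_ofNat]
  rw [exp_mul_I, ← ofReal_cos, ← ofReal_sin, Real.cos_pi_div_four, Real.sin_pi_div_four]
  push_cast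
  linear_combination (-(1 + I) / 2) * h

theorem slantIntegral_gaussian (u : ℂ) (c : ℝ) :
    slantIntegral (fun x => cexp (I * Real.pi * x ^ 2 + I * Real.pi * x - x * u)) c =
      cexp (I * u ^ 2 / (4 * Real.pi) + u / 2) := by
  have hπ : (Real.pi : ℂ) ≠ 0 := ofReal_ne_zero.mpr Real.pi_ne_zero
  have quadratic : ∀ v : ℝ,
      I * Real.pi * slantLine c v ^ 2 + I * Real.pi * slantLine c v - slantLine c v * u =
        (-(2 * Real.pi) : ℂ) * (v : ℂ) ^ 2 +
          (1 + I) * (2 * I * Real.pi * c + I * Real.pi - u) * v +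
          (I * Real.pi * c ^ 2 + (I * Real.pi - u) * c) := by
    intro v
    unfold slantLine
    linear_combination (Real.pi * (v : ℂ) ^ 2 * (2 + I)) * I_sq
  have gauss_const : (1 + I) * (Real.pi / -(-(2 * Real.pi)) : ℂ) ^ (1 / 2 : ℂ) =
      cexp ((Real.pi / 4 : ℝ) * I) := by
    have half : (Real.pi / -(-(2 * Real.pi)) : ℂ) = ((1 / 2 : ℝ) : ℂ) := by
      push_cast; field_simp
    have hs : (Real.sqrt 2 : ℝ) * Real.sqrt (1 / 2) = 1 := by
      rw [← Real.sqrt_mul zero_le_two]; norm_num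
    rw [half, show (1 / 2 : ℂ) = ((1 / 2 : ℝ) : ℂ) by push_cast; rfl,
      ← ofReal_cpow (by norm_num), ← Real.sqrt_eq_rpow, one_add_I_eq_sqrt_two_mul_exp,
      mul_right_comm, ← ofReal_mul, hs, ofReal_one, one_mul]
  simp_rw [slantIntegral, quadratic]
  rw [integral_const_mul, integral_cexp_quadratic (by simp [Real.pi_pos]), ← mul_assoc,
    gauss_const, ← Complex.exp_add]
  have exponent : (Real.pi / 4 : ℝ) * I + (I * Real.pi * c ^ 2 + (I * Real.pi - u) * c -
      ((1 + I) * (2 * I * Real.pi * c + I * Real.pi - u)) ^ 2 / (4 * -(2 * Real.pi))) =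
        I * u ^ 2 / (4 * Real.pi) + u / 2 := by
    push_cast
    field_simp
    ring_nf
    simp only [show I ^ 3 = -I by rw [pow_succ, I_sq]; ring, I_pow_four, I_sq]
    ring
  rw [exponent]

theorem kernelIntegral_exp_succ (u : ℂ) (n : ℕ) :
    kernelIntegral (fun x => cexp (-(x * u))) (n + 1) =
      cexp (-u) * (kernelIntegral (fun x => cexp (-(x * u))) n +
        cexp (I * u ^ 2 / (4 * Real.pi) + u / 2)) := by
  set c : ℝ := n + 1 / 2 with hc
  have shift : ((n + 1 : ℕ) : ℝ) + 1 / 2 = c + 1 := by push_cast; ring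
  have pointwise : ∀ v, cexp (-(slantLine (c + 1) v * u)) * kernel (slantLine (c + 1) v) =
      cexp (-u) * (cexp (-(slantLine c v * u)) * kernel (slantLine c v) +
        cexp (I * Real.pi * slantLine c v ^ 2 + I * Real.pi * slantLine c v -
          slantLine c v * u)) := by
    intro v
    rw [slantLine_add_one, kernel_add_one, sub_eq_add_neg (_ + _), Complex.exp_add _ (-(_ * u)),
      ← kernel_mul_exp_sub_one (kernelDenom_slantLine_ne_zero n v),
      show -((slantLine c v + 1) * u) = -(slantLine c v * u) + -u by ring, Complex.exp_add]
    ring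
  have integrable := integrable_exp_mul_kernel u n
  have gaussian_integrable : Integrable fun v => cexp (I * Real.pi * slantLine c v ^ 2 +
      I * Real.pi * slantLine c v - slantLine c v * u) := by
    have succ_integrable := integrable_exp_mul_kernel u (n + 1)
    rw [shift] at succ_integrable
    refine ((succ_integrable.const_mul (cexp u)).sub integrable).congr (ae_of_all _ fun v => ?_)
    have hu : cexp u * cexp (-u) = 1 := by rw [← Complex.exp_add, add_neg_cancel, Complex.exp_zero]
    simp only [Pi.sub_apply, pointwise, ← mul_assoc (cexp u), hu, one_mul, ← hc]
    ring
  rw [← slantIntegral_gaussian u c, kernelIntegral, kernelIntegral, shift]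
  simp only [slantIntegral, pointwise, integral_const_mul]
  rw [integral_add integrable gaussian_integrable]
  ring

/-- The half-plane to the right of the line of slope `1` through the origin. -/
def slantHalfPlane : Set ℂ := {x | 0 < x.re - x.im}

theorem isOpen_slantHalfPlane : IsOpen slantHalfPlane := isOpen_lt continuous_const (by fun_prop)

theorem slantHalfPlane_subset_slitPlane : slantHalfPlane ⊆ slitPlane := by
  intro x hx
  rw [mem_slitPlane_iff]
  by_cases h : x.im = 0
  · left; simpa [slantHalfPlane, h] using hx
  · exact Or.inr h

theorem slantLine_mem_slantHalfPlane {c : ℝ} (hc : 0 < c) (v : ℝ) :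
    slantLine c v ∈ slantHalfPlane := by
  simpa [slantHalfPlane] using hc

/-- The function `(x - m) * kernel x` with its singularity at the integer `m` removed. -/
noncomputable def regularKernel (m : ℤ) (x : ℂ) : ℂ :=
  cexp (I * Real.pi * x ^ 2) / dslope kernelDenom m x

theorem regularKernel_of_ne {m : ℤ} {x : ℂ} (hx : x ≠ m) :
    regularKernel m x = (x - m) * kernel x := by
  rw [regularKernel, dslope_of_ne _ hx, slope_def_field, kernelDenom_intCast, sub_zero, kernel,
    div_div_eq_mul_div, mul_div_assoc', mul_comm]

theorem differentiableAt_regularKernel {m : ℤ} {x : ℂ} (h : |x.re - x.im - m| ≤ 1 / 2) :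
    DifferentiableAt ℂ (regularKernel m) x := by
  have slope_differentiable : DifferentiableAt ℂ (dslope kernelDenom m) x :=
    ((differentiableOn_dslope univ_mem).mpr
      differentiable_kernelDenom.differentiableOn).differentiableAt univ_mem
  refine DifferentiableAt.div (by fun_prop) slope_differentiable ?_
  by_cases hx : x = m
  · rw [hx, dslope_same]
    exact deriv_kernelDenom_intCast_ne_zero m
  · rw [dslope_of_ne _ hx, slope_def_field, kernelDenom_intCast, sub_zero]
    exact div_ne_zero (kernelDenom_ne_zero_of_abs_sub_le hx h) (sub_ne_zero.mpr hx)

theorem kernelIntegral_succ_of_eq_zero {g : ℂ → ℂ} {C a : ℝ} {n : ℕ}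
    (hg : DifferentiableOn ℂ g slantHalfPlane) (ha : 0 ≤ a)
    (hb : ∀ x : ℂ, 1 / 2 ≤ x.re - x.im → ‖g x‖ ≤ C * Real.exp (a * ‖x‖))
    (hzero : g ((n + 1 : ℕ) : ℂ) = 0) : kernelIntegral g (n + 1) = kernelIntegral g n := by
  set m : ℤ := ((n + 1 : ℕ) : ℤ) with hm
  have : (0 : ℝ) ≤ n := n.cast_nonneg
  have cast_m : (m : ℂ) = ((n + 1 : ℕ) : ℂ) := Int.cast_natCast _
  have m_mem : slantHalfPlane ∈ 𝓝 (m : ℂ) := isOpen_slantHalfPlane.mem_nhds <| by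
    simp only [slantHalfPlane, cast_m, mem_ofPred_eq, natCast_re, natCast_im, sub_zero]
    positivity
  have eq_extension : ∀ x : ℂ, x ≠ m → g x * kernel x = dslope g m x * regularKernel m x := by
    intro x hx
    rw [regularKernel_of_ne hx, ← mul_assoc, mul_comm (dslope g m x), ← smul_eq_mul (x - m),
      sub_smul_dslope, cast_m, hzero, sub_zero]
  have on_line : ∀ k : ℕ, kernelIntegral g k =
      slantIntegral (fun x => dslope g m x * regularKernel m x) (k + 1 / 2) := by
    intro k
    refine integral_congr_ae (ae_of_all _ fun v => congrArg _ (eq_extension _ fun h => ?_))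
    exact kernelDenom_slantLine_ne_zero k v (h ▸ kernelDenom_intCast m)
  have differentiable : ∀ x : ℂ, x.re - x.im ∈ Icc ((n : ℝ) + 1 / 2) ((n + 1 : ℕ) + 1 / 2) →
      DifferentiableAt ℂ (fun x => dslope g m x * regularKernel m x) x := by
    intro x hx
    have hx' : |x.re - x.im - m| ≤ 1 / 2 := by
      rw [hm, Int.cast_natCast, abs_le]
      push_cast at hx ⊢
      constructor <;> linarith [hx.1, hx.2]
    exact (((differentiableOn_dslope m_mem).mpr hg).differentiableAt
      (isOpen_slantHalfPlane.mem_nhds (show 0 < x.re - x.im by linarith [hx.1]))).mul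
        (differentiableAt_regularKernel hx')
  rw [on_line, on_line]
  refine (slantIntegral_eq_of_differentiableOn (V := 1)
    (C := C * decayConst a ((n + 1 : ℕ) + 1 / 2)) (by push_cast; linarith)
    (fun x hx => (differentiable x hx).continuousAt.continuousWithinAt)
    (fun x hx => (differentiable x (Ioo_subset_Icc_self hx)).differentiableWithinAt)
    fun c hc v hv => ?_).symm
  have him : 1 ≤ |(slantLine c v).im| := by rwa [slantLine_im]
  rw [← eq_extension _ fun h => by
    rw [h, intCast_im, abs_zero] at him
    linarith]
  exact norm_mul_kernel_slantLine_le ha (by rw [abs_of_nonneg (by linarith [hc.1])]; exact hc.2)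
    (hb _ (by rw [slantLine_re, slantLine_im]; linarith [hc.1]))
    (one_le_norm_kernelDenom_of_one_le_abs_im him)

theorem kernelIntegral_sub_const {g : ℂ → ℂ} {n : ℕ} (z : ℂ) (hg : Integrable fun v =>
    g (slantLine (n + 1 / 2) v) * kernel (slantLine (n + 1 / 2) v)) :
    kernelIntegral (fun x => g x - z) n =
      kernelIntegral g n - z * kernelIntegral (fun _ => 1) n := by
  have one_integrable := integrable_exp_mul_kernel 0 n
  simp only [mul_zero, neg_zero, Complex.exp_zero] at one_integrable
  simp only [kernelIntegral, slantIntegral]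
  rw [← integral_const_mul z,
    ← integral_sub (hg.const_mul _) ((one_integrable.const_mul _).const_mul z)]
  refine integral_congr_ae (ae_of_all _ fun v => ?_)
  ring

theorem kernelIntegral_one_succ (n : ℕ) :
    kernelIntegral (fun _ => 1) (n + 1) = kernelIntegral (fun _ => 1) n + 1 := by
  simpa using kernelIntegral_exp_succ 0 n

theorem continuous_comp_slantLine {g : ℂ → ℂ} {c : ℝ} (hg : ContinuousOn g slantHalfPlane)
    (hc : 0 < c) : Continuous fun v => g (slantLine c v) :=
  hg.comp_continuous (continuous_slantLine c) (slantLine_mem_slantHalfPlane hc)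

theorem kernelIntegral_succ {g : ℂ → ℂ} {C a : ℝ} (n : ℕ)
    (hg : DifferentiableOn ℂ g slantHalfPlane) (ha : 0 ≤ a)
    (hb : ∀ x : ℂ, 1 / 2 ≤ x.re - x.im → ‖g x‖ ≤ C * Real.exp (a * ‖x‖)) :
    kernelIntegral g (n + 1) = kernelIntegral g n + g ((n + 1 : ℕ) : ℂ) := by
  have integrable : ∀ k : ℕ, Integrable fun v =>
      g (slantLine (k + 1 / 2) v) * kernel (slantLine (k + 1 / 2) v) := fun k =>
    integrable_mul_kernel k (continuous_comp_slantLine hg.continuousOn (by positivity)) ha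
      fun v => hb _ (by simp)
  have shifted_bound : ∀ x : ℂ, 1 / 2 ≤ x.re - x.im →
      ‖g x - g ((n + 1 : ℕ) : ℂ)‖ ≤ (C + ‖g ((n + 1 : ℕ) : ℂ)‖) * Real.exp (a * ‖x‖) := by
    intro x hx
    have hexp : 1 ≤ Real.exp (a * ‖x‖) := Real.one_le_exp (by positivity)
    rw [add_mul]
    exact (norm_sub_le _ _).trans
      (add_le_add (hb x hx) (le_mul_of_one_le_right (norm_nonneg _) hexp))
  have shift := kernelIntegral_succ_of_eq_zero (n := n) (hg.sub_const (g ((n + 1 : ℕ) : ℂ))) ha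
    shifted_bound (sub_self _)
  rw [kernelIntegral_sub_const _ (integrable _), kernelIntegral_sub_const _ (integrable _),
    kernelIntegral_one_succ] at shift
  linear_combination shift

theorem mordell (u : ℂ) : (cexp u - 1) * kernelIntegral (fun x => cexp (-(x * u))) 0 =
    cexp (I * u ^ 2 / (4 * Real.pi) + u / 2) - 1 := by
  have by_translation := kernelIntegral_exp_succ u 0
  have by_residue := kernelIntegral_succ (g := fun x => cexp (-(x * u))) 0 (by fun_prop)
    (norm_nonneg u) fun x _ => norm_exp_neg_mul_le x u
  have hu : cexp u * cexp (-u) = 1 := by rw [← Complex.exp_add, add_neg_cancel, Complex.exp_zero]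
  rw [by_translation] at by_residue
  simp only [zero_add, Nat.cast_one, one_mul] at by_residue
  linear_combination (-cexp u) * by_residue + (kernelIntegral (fun x => cexp (-(x * u))) 0 +
    cexp (I * u ^ 2 / (4 * Real.pi) + u / 2) - 1) * hu

/-! ### Riemann's integral -/

theorem norm_log_le {x : ℂ} (hx : 1 / 4 ≤ ‖x‖) : ‖log x‖ ≤ ‖x‖ + 8 := by
  have norm_pos : 0 < ‖x‖ := by linarith
  have inv_le : ‖x‖⁻¹ ≤ 4 := by rw [inv_le_comm₀ norm_pos (by norm_num)]; linarith
  have abs_log_le : |Real.log ‖x‖| ≤ ‖x‖ + 4 := by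
    have upper := Real.log_le_sub_one_of_pos norm_pos
    have lower := Real.one_sub_inv_le_log_of_pos norm_pos
    rw [abs_le]
    constructor <;> linarith
  have h := norm_le_abs_re_add_abs_im (log x)
  rw [log_re, log_im] at h
  linarith [abs_arg_le_pi x, Real.pi_lt_four]

theorem norm_cpow_le {x : ℂ} (hx : 1 / 4 ≤ ‖x‖) (s : ℂ) :
    ‖x ^ s‖ ≤ Real.exp (8 * ‖s‖) * Real.exp (‖s‖ * ‖x‖) := by
  have hx0 : x ≠ 0 := norm_pos_iff.mp (by linarith)
  rw [cpow_def_of_ne_zero hx0, ← Real.exp_add]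
  refine (norm_exp_le_exp_norm _).trans (Real.exp_le_exp.mpr ?_)
  rw [norm_mul]
  nlinarith [mul_le_mul_of_nonneg_right (norm_log_le hx) (norm_nonneg s)]

theorem quarter_le_norm {x : ℂ} (hx : 1 / 2 ≤ x.re - x.im) : 1 / 4 ≤ ‖x‖ := by
  linarith [abs_re_le_norm x, abs_im_le_norm x, le_abs_self x.re, neg_abs_le x.im]

theorem norm_cpow_neg_le {x : ℂ} (hx : 1 / 2 ≤ x.re - x.im) (s : ℂ) :
    ‖x ^ (-s)‖ ≤ Real.exp (8 * ‖s‖) * Real.exp (‖s‖ * ‖x‖) := by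
  simpa only [norm_neg] using norm_cpow_le (quarter_le_norm hx) (-s)

theorem differentiableOn_cpow_neg (s : ℂ) :
    DifferentiableOn ℂ (fun x => x ^ (-s)) slantHalfPlane := fun _ hx =>
  (differentiableAt_id.cpow (differentiableAt_const _)
    (slantHalfPlane_subset_slitPlane hx)).differentiableWithinAt

theorem continuousOn_log_slantHalfPlane : ContinuousOn log slantHalfPlane :=
  continuousOn_id.clog slantHalfPlane_subset_slitPlane

/-- Riemann's integral of `x ^ (-s)` against the kernel along the line crossing the real axis at
`n + 1/2`. -/
noncomputable def riemannIntegral (n : ℕ) (s : ℂ) : ℂ := kernelIntegral (fun x => x ^ (-s)) n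

/-- The derivative of `riemannIntegral n` with respect to `s`. -/
noncomputable def riemannIntegralDeriv (n : ℕ) (s : ℂ) : ℂ :=
  kernelIntegral (fun x => -log x * x ^ (-s)) n

theorem riemannIntegral_succ (n : ℕ) (s : ℂ) :
    riemannIntegral (n + 1) s = riemannIntegral n s + ((n + 1 : ℕ) : ℂ) ^ (-s) :=
  kernelIntegral_succ n (differentiableOn_cpow_neg s) (norm_nonneg s)
    fun _ hx => norm_cpow_neg_le hx s

theorem riemannIntegral_eq_add_sum (n : ℕ) (s : ℂ) :
    riemannIntegral n s = riemannIntegral 0 s + ∑ k ∈ Finset.Ico 1 (n + 1), (k : ℂ) ^ (-s) := by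
  induction n with
  | zero => simp
  | succ n ih =>
    rw [riemannIntegral_succ, ih, Finset.sum_Ico_succ_top (b := n + 1) (by omega), add_assoc]

theorem integrable_cpow_neg_mul_kernel (n : ℕ) (s : ℂ) : Integrable fun v =>
    slantLine (n + 1 / 2) v ^ (-s) * kernel (slantLine (n + 1 / 2) v) :=
  integrable_mul_kernel n
    (continuous_comp_slantLine (differentiableOn_cpow_neg s).continuousOn (by positivity))
    (norm_nonneg s) fun _ => norm_cpow_neg_le (by simp) s

theorem norm_log_mul_cpow_neg_le {x s : ℂ} {R : ℝ} (hx : 1 / 2 ≤ x.re - x.im) (hs : ‖s‖ ≤ R) :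
    ‖-log x * x ^ (-s)‖ ≤ Real.exp (8 * (R + 1)) * Real.exp ((R + 1) * ‖x‖) := by
  have log_le : ‖log x‖ ≤ Real.exp (‖x‖ + 8) := by
    linarith [norm_log_le (quarter_le_norm hx), Real.add_one_le_exp (‖x‖ + 8)]
  have cpow_le : ‖x ^ (-s)‖ ≤ Real.exp (8 * R) * Real.exp (R * ‖x‖) :=
    (norm_cpow_neg_le hx s).trans (by gcongr)
  calc ‖-log x * x ^ (-s)‖ ≤ Real.exp (‖x‖ + 8) * (Real.exp (8 * R) * Real.exp (R * ‖x‖)) := by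
        rw [norm_mul, norm_neg]; gcongr
    _ = Real.exp (8 * (R + 1)) * Real.exp ((R + 1) * ‖x‖) := by
        simp only [← Real.exp_add]; ring_nf

theorem hasDerivAt_riemannIntegral (n : ℕ) (s : ℂ) :
    HasDerivAt (riemannIntegral n) (riemannIntegralDeriv n s) s := by
  set x : ℝ → ℂ := slantLine (n + 1 / 2) with hx
  have hc : (0 : ℝ) < n + 1 / 2 := by positivity
  have cpow_continuous : ∀ s : ℂ, Continuous fun v => x v ^ (-s) := fun s =>
    continuous_comp_slantLine (differentiableOn_cpow_neg s).continuousOn hc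
  have log_continuous : Continuous fun v => log (x v) :=
    continuous_comp_slantLine continuousOn_log_slantHalfPlane hc
  have kernel_continuous := continuous_kernel_slantLine n
  set bound : ℝ → ℝ := fun v =>
    Real.exp (8 * (‖s‖ + 1 + 1)) * Real.exp ((‖s‖ + 1 + 1) * ‖x v‖)
  have bound_integrable : Integrable fun v => ((bound v : ℝ) : ℂ) * kernel (x v) :=
    integrable_mul_kernel n (by fun_prop) (by positivity : 0 ≤ ‖s‖ + 1 + 1)
      fun v => by rw [norm_real, Real.norm_of_nonneg (by positivity)]
  refine (hasDerivAt_integral_of_dominated_loc_of_deriv_le (μ := volume)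
    (F := fun s v => (1 + I) * (x v ^ (-s) * kernel (x v)))
    (F' := fun s v => (1 + I) * (-log (x v) * x v ^ (-s) * kernel (x v)))
    (bound := fun v => ‖1 + I‖ * ‖((bound v : ℝ) : ℂ) * kernel (x v)‖)
    (Metric.ball_mem_nhds s one_pos) ?_ ?_ ?_ ?_ ?_ ?_).2
  · exact Eventually.of_forall fun s =>
      (((cpow_continuous s).mul kernel_continuous).const_mul _).aestronglyMeasurable
  · exact (integrable_cpow_neg_mul_kernel n s).const_mul _
  · exact (((log_continuous.neg.mul (cpow_continuous s)).mul
      kernel_continuous).const_mul _).aestronglyMeasurable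
  · refine ae_of_all _ fun v z hz => ?_
    have norm_z_le : ‖z‖ ≤ ‖s‖ + 1 := by
      linarith [norm_sub_norm_le z s, mem_ball_iff_norm.mp hz]
    rw [norm_mul, norm_mul _ (kernel _), norm_mul _ (kernel _), norm_real,
      Real.norm_of_nonneg (by positivity)]
    gcongr
    exact norm_log_mul_cpow_neg_le (by simp [hx]) norm_z_le
  · exact bound_integrable.norm.const_mul _
  · refine ae_of_all _ fun v z _ => ?_
    have x_ne : x v ≠ 0 := slitPlane_ne_zero
      (slantHalfPlane_subset_slitPlane (slantLine_mem_slantHalfPlane hc v))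
    refine ((((hasDerivAt_id z).neg.const_cpow (c := x v) (Or.inl x_ne)).mul_const
      (kernel (x v))).const_mul (1 + I)).congr_deriv ?_
    simp only [Pi.neg_apply, id]
    ring

/-! ### Mellin transforms along rays -/

theorem continuousOn_cpow_Ioi (s : ℂ) : ContinuousOn (fun r : ℝ => (r : ℂ) ^ s) (Ioi 0) :=
  fun r hr => (continuousAt_ofReal_cpow_const r s (Or.inr (ne_of_gt hr))).continuousWithinAt

theorem norm_exp_neg_mul_ofReal (z : ℂ) (r : ℝ) : ‖cexp (-(z * r))‖ = Real.exp (-z.re * r) := by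
  simp [norm_exp]

theorem mellinConvergent_exp_neg_mul {s z : ℂ} (hs : 0 < s.re) (hz : 0 < z.re) :
    MellinConvergent (fun r : ℝ => cexp (-(z * r))) s := by
  have hcont : Continuous fun r : ℝ => cexp (-(z * r)) := by fun_prop
  refine mellinConvergent_of_isBigO_rpow_exp (b := 0) hz
    (hcont.locallyIntegrable.locallyIntegrableOn _) ?_ ?_ hs
  · exact (Asymptotics.isBigO_of_le _ fun r => by
      rw [norm_exp_neg_mul_ofReal, Real.norm_of_nonneg (Real.exp_nonneg _)])
  · simpa using (hcont.tendsto 0).mono_left nhdsWithin_le_nhds |>.isBigO_one ℝ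

theorem differentiableAt_mellin_exp_neg_mul {s z : ℂ} (hs : 0 < s.re) (hz : 0 < z.re) :
    DifferentiableAt ℂ (fun z => mellin (fun r : ℝ => cexp (-(z * r))) s) z := by
  have integrable_bound := mellinConvergent_exp_neg_mul (s := s + 1) (z := (z.re / 2 : ℝ))
    (by rw [add_re, one_re]; linarith) (by rw [ofReal_re]; linarith)
  have measurable : ∀ {g : ℝ → ℂ}, Continuous g → AEStronglyMeasurable
      (fun r : ℝ => (r : ℂ) ^ (s - 1) • g r) (volume.restrict (Ioi 0)) := fun hg =>
    ((continuousOn_cpow_Ioi _).smul hg.continuousOn).aestronglyMeasurable measurableSet_Ioi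
  refine (hasDerivAt_integral_of_dominated_loc_of_deriv_le (μ := volume.restrict (Ioi 0))
    (F := fun z (r : ℝ) => (r : ℂ) ^ (s - 1) • cexp (-(z * r)))
    (F' := fun z (r : ℝ) => (r : ℂ) ^ (s - 1) • (cexp (-(z * r)) * -r))
    (bound := fun r : ℝ => ‖(r : ℂ) ^ (s + 1 - 1) • cexp (-((z.re / 2 : ℝ) * r))‖)
    (Metric.ball_mem_nhds z (half_pos hz)) (Eventually.of_forall fun _ => measurable (by fun_prop))
    (mellinConvergent_exp_neg_mul hs hz) (measurable (by fun_prop)) ?_ integrable_bound.norm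
    ?_).2.differentiableAt
  · filter_upwards [ae_restrict_mem measurableSet_Ioi] with r (hr : 0 < r) w hw
    have half_le : z.re / 2 ≤ w.re := by
      have := (abs_le.mp ((abs_re_le_norm (w - z)).trans (mem_ball_iff_norm.mp hw).le)).1
      rw [sub_re] at this
      linarith
    rw [smul_eq_mul, smul_eq_mul, norm_mul, norm_mul, norm_mul, norm_exp_neg_mul_ofReal,
      norm_exp_neg_mul_ofReal, add_sub_right_comm, cpow_add _ _ (ofReal_ne_zero.mpr hr.ne'),
      cpow_one, norm_mul, norm_neg, ofReal_re, mul_right_comm, ← mul_assoc]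
    gcongr
  · refine ae_of_all _ fun r w _ => (HasDerivAt.cexp ?_).const_mul _
    exact (((hasDerivAt_id w).mul_const (r : ℂ)).neg).congr_deriv (by rw [one_mul])

theorem frequently_nhdsNE_one_ofReal_pos {p : ℂ → Prop} (hp : ∀ x : ℝ, 0 < x → p x) :
    ∃ᶠ z in 𝓝[≠] (1 : ℂ), p z := by
  have embed : Tendsto ((↑) : ℝ → ℂ) (𝓝[>] 1) (𝓝[≠] 1) := by
    refine tendsto_nhdsWithin_iff.mpr ⟨?_, ?_⟩
    · exact (continuous_ofReal.tendsto' 1 1 ofReal_one).mono_left nhdsWithin_le_nhds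
    · filter_upwards [self_mem_nhdsWithin] with x (hx : 1 < x) using ofReal_ne_one.mpr hx.ne'
  refine embed.frequently (Eventually.frequently ?_)
  filter_upwards [self_mem_nhdsWithin] with x (hx : 1 < x) using hp x (by linarith)

theorem hasMellin_exp_neg_mul {s z : ℂ} (hs : 0 < s.re) (hz : 0 < z.re) :
    HasMellin (fun r : ℝ => cexp (-(z * r))) s (z ^ (-s) * Gamma s) := by
  have isOpen_halfPlane : IsOpen {z : ℂ | 0 < z.re} := isOpen_lt continuous_const continuous_re
  refine ⟨mellinConvergent_exp_neg_mul hs hz, ?_⟩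
  refine AnalyticOnNhd.eqOn_of_preconnected_of_frequently_eq
    (f := fun z => mellin (fun r : ℝ => cexp (-(z * r))) s) (g := fun z => z ^ (-s) * Gamma s)
    (DifferentiableOn.analyticOnNhd (fun z hz =>
      (differentiableAt_mellin_exp_neg_mul hs hz).differentiableWithinAt) isOpen_halfPlane)
    (DifferentiableOn.analyticOnNhd (fun z hz => ?_) isOpen_halfPlane)
    (convex_halfSpace_re_gt 0).isPreconnected (show 0 < (1 : ℂ).re by simp)
    (frequently_nhdsNE_one_ofReal_pos fun x hx => ?_) hz
  · exact ((differentiableAt_id.cpow_const (Or.inl hz)).mul_const _).differentiableWithinAt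
  · have arg_ne : (x : ℂ).arg ≠ Real.pi := by
      rw [arg_ofReal_of_nonneg hx.le]; exact Real.pi_ne_zero.symm
    rw [cpow_neg, ← inv_cpow _ _ arg_ne, ← one_div]
    exact integral_cpow_mul_exp_neg_mul_Ioi hs hx

theorem le_norm_exp_mul_sub_one {z : ℂ} {r : ℝ} (hz : 0 < z.re) (hr : 0 < r) :
    z.re * r * Real.exp (z.re / 2 * r) ≤ ‖cexp (z * r) - 1‖ := by
  have exp_le : Real.exp (z.re * r) - 1 ≤ ‖cexp (z * r) - 1‖ := by
    simpa [norm_exp] using norm_sub_norm_le (cexp (z * r)) 1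
  have le_sinh := Real.self_le_sinh_iff.mpr (show 0 ≤ z.re / 2 * r by positivity)
  rw [Real.sinh_eq] at le_sinh
  have exp_sq : Real.exp (z.re / 2 * r) * Real.exp (z.re / 2 * r) = Real.exp (z.re * r) := by
    rw [← Real.exp_add]; ring_nf
  have exp_mul_exp_neg : Real.exp (-(z.re / 2 * r)) * Real.exp (z.re / 2 * r) = 1 := by
    rw [← Real.exp_add, neg_add_cancel, Real.exp_zero]
  have scaled := mul_le_mul_of_nonneg_right le_sinh (Real.exp_pos (z.re / 2 * r)).le
  nlinarith

theorem exp_mul_sub_one_ne_zero {z : ℂ} {r : ℝ} (hz : 0 < z.re) (hr : 0 < r) :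
    cexp (z * r) - 1 ≠ 0 :=
  norm_pos_iff.mp (lt_of_lt_of_le (by positivity) (le_norm_exp_mul_sub_one hz hr))

theorem norm_one_div_exp_mul_sub_one_le {z : ℂ} {r : ℝ} (hz : 0 < z.re) (hr : 0 < r) :
    ‖1 / (cexp (z * r) - 1)‖ ≤ z.re⁻¹ * (r⁻¹ * Real.exp (-(z.re / 2) * r)) := by
  rw [norm_div, norm_one, one_div, neg_mul, Real.exp_neg, ← mul_inv, ← mul_inv, ← mul_assoc]
  exact inv_anti₀ (by positivity) (le_norm_exp_mul_sub_one hz hr)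

theorem mellinConvergent_one_div_exp_mul_sub_one {s z : ℂ} (hs : 1 < s.re) (hz : 0 < z.re) :
    MellinConvergent (fun r : ℝ => 1 / (cexp (z * r) - 1)) s := by
  have hcont : ContinuousOn (fun r : ℝ => 1 / (cexp (z * r) - 1)) (Ioi 0) :=
    continuousOn_const.div (by fun_prop) fun r hr => exp_mul_sub_one_ne_zero hz hr
  refine mellinConvergent_of_isBigO_rpow_exp (half_pos hz)
    (hcont.locallyIntegrableOn measurableSet_Ioi) ?_ ?_ hs
  · refine Asymptotics.IsBigO.of_bound z.re⁻¹ ?_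
    filter_upwards [eventually_ge_atTop 1] with r hr
    refine (norm_one_div_exp_mul_sub_one_le hz (by linarith)).trans ?_
    rw [Real.norm_of_nonneg (Real.exp_nonneg _)]
    gcongr
    exact mul_le_of_le_one_left (Real.exp_nonneg _) (inv_le_one_of_one_le₀ hr)
  · refine Asymptotics.IsBigO.of_bound z.re⁻¹ ?_
    filter_upwards [self_mem_nhdsWithin] with r (hr : 0 < r)
    refine (norm_one_div_exp_mul_sub_one_le hz hr).trans ?_
    rw [Real.rpow_neg_one, Real.norm_of_nonneg (inv_nonneg.mpr hr.le)]
    gcongr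
    exact mul_le_of_le_one_right (inv_nonneg.mpr hr.le) (Real.exp_le_one_iff.mpr (by nlinarith))

theorem ofReal_mul_cpow {r : ℝ} (hr : 0 < r) {z : ℂ} (hz : z ≠ 0) (s : ℂ) :
    (r * z : ℂ) ^ s = (r : ℂ) ^ s * z ^ s := by
  have hr' : (r : ℂ) ≠ 0 := ofReal_ne_zero.mpr hr.ne'
  rw [cpow_def_of_ne_zero (mul_ne_zero hr' hz), cpow_def_of_ne_zero hr', cpow_def_of_ne_zero hz,
    log_ofReal_mul hr hz, ofReal_log hr.le, ← Complex.exp_add, add_mul]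

theorem hasSum_exp_neg_nat_mul {w : ℂ} (hw : 0 < w.re) :
    HasSum (fun n : ℕ => cexp (-(((n + 1 : ℝ) : ℂ) * w))) (1 / (cexp w - 1)) := by
  have norm_lt : ‖cexp (-w)‖ < 1 := by rw [norm_exp, Real.exp_lt_one_iff, neg_re]; linarith
  have hsum := (hasSum_geometric_of_norm_lt_one norm_lt).mul_left (cexp (-w))
  have value : cexp (-w) * (1 - cexp (-w))⁻¹ = 1 / (cexp w - 1) := by
    rw [one_div, Complex.exp_neg, ← mul_inv, mul_sub, mul_one,
      mul_inv_cancel₀ (Complex.exp_ne_zero w)]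
  rw [value] at hsum
  refine hsum.congr_fun fun n => ?_
  rw [← Complex.exp_nat_mul, ← Complex.exp_add]
  push_cast
  ring_nf

theorem integral_norm_cpow_smul_exp_neg_mul {s z : ℂ} (hs : 0 < s.re) (hz : 0 < z.re) :
    ∫ r : ℝ in Ioi 0, ‖(r : ℂ) ^ (s - 1) • cexp (-(z * r))‖ =
      (1 / z.re) ^ s.re * Real.Gamma s.re := by
  rw [← Real.integral_rpow_mul_exp_neg_mul_Ioi hs hz]
  refine setIntegral_congr_fun measurableSet_Ioi fun r hr => ?_
  simp only [norm_smul, norm_cpow_eq_rpow_re_of_pos hr, norm_exp_neg_mul_ofReal, sub_re, one_re,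
    neg_mul]

theorem hasMellin_one_div_exp_mul_sub_one {s z : ℂ} (hs : 1 < s.re) (hz : 0 < z.re) :
    HasMellin (fun r : ℝ => 1 / (cexp (z * r) - 1)) s (z ^ (-s) * Gamma s * riemannZeta s) := by
  have hs0 : 0 < s.re := by linarith
  have hz0 : z ≠ 0 := fun h => by simp [h] at hz
  have re_pos : ∀ n : ℕ, 0 < (((n + 1 : ℝ) : ℂ) * z).re := fun n => by
    rw [re_ofReal_mul]; positivity
  have termwise := fun n => hasMellin_exp_neg_mul hs0 (re_pos n)
  have summable : Summable fun n : ℕ =>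
      ∫ r : ℝ in Ioi 0, ‖(r : ℂ) ^ (s - 1) • cexp (-(((n + 1 : ℝ) : ℂ) * z * r))‖ := by
    refine (((summable_nat_add_iff 1).mpr (Real.summable_one_div_nat_rpow.mpr hs)).mul_right
      ((1 / z.re) ^ s.re * Real.Gamma s.re)).congr fun n => ?_
    rw [integral_norm_cpow_smul_exp_neg_mul hs0 (re_pos n), re_ofReal_mul, ← one_div_mul_one_div,
      Real.mul_rpow (by positivity) (by positivity),
      Real.div_rpow (y := n + 1) zero_le_one (by positivity), Real.one_rpow, Nat.cast_succ,
      mul_assoc]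
  have interchange := hasSum_integral_of_summable_integral_norm (fun n => (termwise n).1) summable
  refine ⟨mellinConvergent_one_div_exp_mul_sub_one hs hz, ?_⟩
  have value : ∀ n : ℕ, ∫ r : ℝ in Ioi 0,
      (r : ℂ) ^ (s - 1) • cexp (-(((n + 1 : ℝ) : ℂ) * z * r)) =
        z ^ (-s) * Gamma s * (1 / ((n : ℂ) + 1) ^ s) := fun n => by
    refine (termwise n).2.trans ?_
    rw [ofReal_mul_cpow (by positivity) hz0, one_div, cpow_neg (((n + 1 : ℝ) : ℂ))]
    push_cast
    ring
  rw [zeta_eq_tsum_one_div_nat_add_one_cpow hs, ← tsum_mul_left, ← tsum_congr value,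
    interchange.tsum_eq]
  refine setIntegral_congr_fun measurableSet_Ioi fun r (hr : 0 < r) => ?_
  have geometric := hasSum_exp_neg_nat_mul (w := z * r) (by rw [re_mul_ofReal]; positivity)
  simp only [← mul_assoc] at geometric
  exact (geometric.const_smul ((r : ℂ) ^ (s - 1))).tsum_eq.symm

/-! ### The functional equation of Riemann's integral -/

theorem arg_one_add_I : arg (1 + I) = Real.pi / 4 := by
  rw [one_add_I_eq_sqrt_two_mul_exp, arg_real_mul _ (by positivity), arg_exp_mul_I,
    toIocMod_eq_self]
  constructor <;> linarith [Real.pi_pos]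

theorem one_add_I_ne_zero : (1 + I : ℂ) ≠ 0 := fun h => by simpa using congrArg re h

/-- The complex frequency for which `mordell` relates an exponential integral against the kernel
to the values of the kernel on the ray through `1 + I`. -/
noncomputable def rayFrequency : ℂ := (2 * Real.pi : ℝ) * (1 + I)

theorem mul_rayFrequency_re (x : ℂ) : (x * rayFrequency).re = 2 * Real.pi * (x.re - x.im) := by
  rw [rayFrequency, mul_left_comm, re_ofReal_mul]
  simp only [mul_re, add_re, add_im, one_re, one_im, I_re, I_im]
  ring

theorem rayFrequency_re_pos : 0 < rayFrequency.re := by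
  simp [rayFrequency, Real.pi_pos]

theorem rayFrequency_ne_zero : rayFrequency ≠ 0 := fun h => by
  simpa [h] using rayFrequency_re_pos

theorem arg_le_pi_div_two_of_mem_slantHalfPlane {x : ℂ} (hx : x ∈ slantHalfPlane) :
    x.arg ≤ Real.pi / 2 := by
  have hx : 0 < x.re - x.im := hx
  rcases le_or_gt 0 x.im with him | him
  · exact (abs_le.mp (abs_arg_le_pi_div_two_iff.mpr (by linarith))).2
  · linarith [arg_neg_iff.mpr him, Real.pi_pos]

theorem mul_rayFrequency_cpow {x : ℂ} (hx : x ∈ slantHalfPlane) (s : ℂ) :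
    (x * rayFrequency) ^ s = x ^ s * rayFrequency ^ s := by
  have hx0 := slitPlane_ne_zero (slantHalfPlane_subset_slitPlane hx)
  have arg_rayFrequency : arg rayFrequency = Real.pi / 4 := by
    rw [rayFrequency, arg_real_mul _ (by positivity), arg_one_add_I]
  have log_mul := (log_mul_eq_add_log_iff hx0 rayFrequency_ne_zero).mpr <| by
    rw [arg_rayFrequency]
    constructor <;> linarith [neg_pi_lt_arg x, arg_le_pi_div_two_of_mem_slantHalfPlane hx,
      Real.pi_pos]
  rw [cpow_def_of_ne_zero (mul_ne_zero hx0 rayFrequency_ne_zero), cpow_def_of_ne_zero hx0,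
    cpow_def_of_ne_zero rayFrequency_ne_zero, log_mul, add_mul, Complex.exp_add]

theorem integrable_cpow_mul_exp_mul_kernel {s : ℂ} (hs : 0 < s.re) :
    Integrable (Function.uncurry fun v r : ℝ => (r : ℂ) ^ (s - 1) * ((1 + I) *
      (cexp (-(slantLine (1 / 2) v * (rayFrequency * r))) * kernel (slantLine (1 / 2) v))))
      (volume.prod (volume.restrict (Ioi 0))) := by
  have kernel_integrable : Integrable fun v => (1 + I) * kernel (slantLine (1 / 2) v) := by
    simpa using (integrable_exp_mul_kernel 0 0).const_mul (1 + I)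
  have gamma_integrable := mellinConvergent_exp_neg_mul hs (z := (Real.pi : ℝ))
    (by rw [ofReal_re]; exact Real.pi_pos)
  have oscillation_le : ∀ p : ℝ × ℝ,
      ‖cexp (-((slantLine (1 / 2) p.1 * rayFrequency - Real.pi) * p.2))‖ ≤ 1 := fun p => by
    rw [norm_exp_neg_mul_ofReal, sub_re, mul_rayFrequency_re, slantLine_re, slantLine_im,
      ofReal_re, Real.exp_le_one_iff]
    apply le_of_eq
    ring
  refine ((kernel_integrable.mul_prod gamma_integrable).mul_bdd
    (Continuous.aestronglyMeasurable (by fun_prop)) (ae_of_all _ oscillation_le)).congr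
    (ae_of_all _ fun p => ?_)
  have split_exp : cexp (-(slantLine (1 / 2) p.1 * (rayFrequency * p.2))) =
      cexp (-(Real.pi * p.2)) *
        cexp (-((slantLine (1 / 2) p.1 * rayFrequency - Real.pi) * p.2)) := by
    rw [← Complex.exp_add]
    ring_nf
  simp only [Function.uncurry, smul_eq_mul, split_exp]
  ring

theorem hasMellin_kernelIntegral_exp {s : ℂ} (hs : 0 < s.re) :
    HasMellin (fun r : ℝ => kernelIntegral (fun x => cexp (-(x * (rayFrequency * r)))) 0) s
      (rayFrequency ^ (-s) * Gamma s * riemannIntegral 0 s) := by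
  have integrable := integrable_cpow_mul_exp_mul_kernel hs
  have inner : ∀ r : ℝ,
      (r : ℂ) ^ (s - 1) • kernelIntegral (fun x => cexp (-(x * (rayFrequency * r)))) 0 =
      ∫ v : ℝ, (r : ℂ) ^ (s - 1) * ((1 + I) *
        (cexp (-(slantLine (1 / 2) v * (rayFrequency * r))) * kernel (slantLine (1 / 2) v))) := by
    intro r
    rw [integral_const_mul, kernelIntegral, Nat.cast_zero, zero_add, slantIntegral, smul_eq_mul]
  constructor
  · exact integrable.integral_prod_right.congr (ae_of_all _ fun r => (inner r).symm)
  · simp_rw [mellin, inner]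
    rw [← integral_integral_swap integrable, riemannIntegral, kernelIntegral, slantIntegral,
      Nat.cast_zero, zero_add, ← integral_const_mul]
    refine integral_congr_ae (ae_of_all _ fun v => ?_)
    have hx : slantLine (1 / 2) v ∈ slantHalfPlane := slantLine_mem_slantHalfPlane one_half_pos v
    have gamma := (hasMellin_exp_neg_mul hs (z := slantLine (1 / 2) v * rayFrequency)
      (by rw [mul_rayFrequency_re]; exact mul_pos Real.two_pi_pos hx)).2
    rw [mul_rayFrequency_cpow hx] at gamma
    calc _ = ∫ r : ℝ in Ioi 0, ((1 + I) * kernel (slantLine (1 / 2) v)) *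
          ((r : ℂ) ^ (s - 1) • cexp (-(slantLine (1 / 2) v * rayFrequency * r))) := by
          refine integral_congr_ae (ae_of_all _ fun r => ?_)
          simp only [smul_eq_mul, mul_assoc]
          ring
      _ = _ := by
          rw [integral_const_mul, ← mellin, gamma]
          ring

theorem kernelIntegral_exp_rayFrequency {r : ℝ} (hr : 0 < r) :
    kernelIntegral (fun x => cexp (-(x * (rayFrequency * r)))) 0 =
      -conj (kernel ((1 + I) * r)) - 1 / (cexp (rayFrequency * r) - 1) := by
  have denom_ne := exp_mul_sub_one_ne_zero rayFrequency_re_pos hr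
  set w : ℂ := cexp (rayFrequency * r / 2) with hw
  have hw0 : w ≠ 0 := Complex.exp_ne_zero _
  have exp_eq_sq : cexp (rayFrequency * r) = w ^ 2 := by
    rw [hw, ← Complex.exp_nat_mul]; push_cast; ring_nf
  have gaussian : cexp (I * (rayFrequency * r) ^ 2 / (4 * Real.pi) + rayFrequency * r / 2) =
      cexp (-(2 * Real.pi * r ^ 2)) * w := by
    rw [hw, ← Complex.exp_add, rayFrequency]
    congr 2
    push_cast
    field_simp
    linear_combination (2 * I + 4) * (r : ℂ) ^ 2 * I_sq
  have conj_kernel : conj (kernel ((1 + I) * r)) = cexp (-(2 * Real.pi * r ^ 2)) / (w⁻¹ - w) := by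
    rw [kernel, kernelDenom_eq_exp_sub_exp, map_div₀, map_sub, ← exp_conj, ← exp_conj, ← exp_conj,
      hw, ← Complex.exp_neg, rayFrequency]
    simp only [map_mul, map_neg, map_pow, map_add, map_one, conj_I, conj_ofReal]
    push_cast
    congr 3
    · linear_combination (2 * Real.pi * r ^ 2 - Real.pi * r ^ 2 * I) * I_sq
    · linear_combination Real.pi * r * I_sq
    · linear_combination (-(Real.pi * r : ℂ)) * I_sq
  have hmordell := mordell (rayFrequency * r)
  rw [gaussian, exp_eq_sq, mul_comm] at hmordell
  rw [exp_eq_sq] at denom_ne ⊢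
  rw [eq_div_of_mul_eq denom_ne hmordell, conj_kernel]
  have : 1 - w ^ 2 ≠ 0 := by rw [← neg_sub]; exact neg_ne_zero.mpr denom_ne
  rw [show w⁻¹ - w = (1 - w ^ 2) / w by field_simp]
  field_simp
  ring

theorem mellin_conj_kernel {s : ℂ} (hs : 1 < s.re) :
    mellin (fun r : ℝ => conj (kernel ((1 + I) * r))) s =
      -(rayFrequency ^ (-s) * Gamma s * (riemannIntegral 0 s + riemannZeta s)) := by
  have exponential := hasMellin_kernelIntegral_exp (s := s) (by linarith)
  have zeta := hasMellin_one_div_exp_mul_sub_one hs rayFrequency_re_pos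
  rw [mul_add, ← exponential.2, ← zeta.2, ← (hasMellin_add exponential.1 zeta.1).2, mellin, mellin,
    ← integral_neg]
  refine setIntegral_congr_fun measurableSet_Ioi fun r hr => ?_
  simp only [kernelIntegral_exp_rayFrequency hr, sub_add_cancel, smul_neg, neg_neg]

theorem cpow_mul_kernel_eq {q : ℂ} (hq : 1 < q.re) (x : ℂ) :
    x ^ q * kernel x = x ^ (q - 1) * regularKernel 0 x := by
  by_cases hx : x = 0
  · have hq0 : q ≠ 0 := fun h => by norm_num [h] at hq
    have hq1 : q - 1 ≠ 0 := fun h => by norm_num [sub_eq_zero.mp h] at hq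
    rw [hx, zero_cpow hq0, zero_cpow hq1, zero_mul, zero_mul]
  · rw [regularKernel_of_ne (by rwa [Int.cast_zero]), Int.cast_zero, sub_zero, cpow_sub _ _ hx,
      cpow_one, ← mul_assoc, div_mul_cancel₀ _ hx]

theorem continuousAt_cpow_mul_kernel {q x : ℂ} (hq : 1 < q.re)
    (hx : x.re - x.im ∈ Icc 0 (1 / 2)) : ContinuousAt (fun x => x ^ q * kernel x) x := by
  simp_rw [cpow_mul_kernel_eq hq]
  refine (continuousAt_cpow_const_of_re_pos ?_ (by simpa using hq)).mul
    (differentiableAt_regularKernel ?_).continuousAt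
  · exact (ne_or_eq x.im 0).symm.imp_left fun him => by linarith [hx.1]
  · rw [Int.cast_zero, sub_zero, abs_of_nonneg hx.1]
    exact hx.2

theorem differentiableAt_cpow_mul_kernel {q x : ℂ} (hq : 1 < q.re)
    (hx : x.re - x.im ∈ Ioc 0 (1 / 2)) : DifferentiableAt ℂ (fun x => x ^ q * kernel x) x := by
  simp_rw [cpow_mul_kernel_eq hq]
  refine (differentiableAt_id.cpow_const (slantHalfPlane_subset_slitPlane hx.1)).mul
    (differentiableAt_regularKernel ?_)
  rw [Int.cast_zero, sub_zero, abs_of_nonneg hx.1.le]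
  exact hx.2

theorem norm_cpow_mul_kernel_slantLine_le (q : ℂ) {c v : ℝ} (hc : c ∈ Icc 0 (1 / 2))
    (hv : 1 ≤ |v|) : ‖slantLine c v ^ q * kernel (slantLine c v)‖ ≤
      Real.exp (8 * ‖q‖) * decayConst ‖q‖ (1 / 2) * Real.exp (-v ^ 2) := by
  have him : 1 ≤ |(slantLine c v).im| := by rwa [slantLine_im]
  exact norm_mul_kernel_slantLine_le (norm_nonneg q) (by rw [abs_of_nonneg hc.1]; exact hc.2)
    (norm_cpow_le (by linarith [abs_im_le_norm (slantLine c v)]) q)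
    (one_le_norm_kernelDenom_of_one_le_abs_im him)

theorem integrable_cpow_mul_kernel_slantLine_zero {q : ℂ} (hq : 1 < q.re) :
    Integrable fun v => slantLine 0 v ^ q * kernel (slantLine 0 v) := by
  refine integrable_of_norm_le_exp_neg_sq (continuous_iff_continuousAt.mpr fun v => ?_)
    fun v hv => norm_cpow_mul_kernel_slantLine_le q (left_mem_Icc.mpr one_half_pos.le) hv
  exact (continuousAt_cpow_mul_kernel hq (by simp)).comp (continuous_slantLine 0).continuousAt

theorem riemannIntegral_neg_eq_slantIntegral_zero {q : ℂ} (hq : 1 < q.re) :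
    riemannIntegral 0 (-q) = slantIntegral (fun x => x ^ q * kernel x) 0 := by
  rw [riemannIntegral, kernelIntegral, neg_neg, Nat.cast_zero, zero_add]
  exact (slantIntegral_eq_of_differentiableOn one_half_pos.le
    (fun x hx => (continuousAt_cpow_mul_kernel hq hx).continuousWithinAt)
    (fun x hx => (differentiableAt_cpow_mul_kernel hq
      (Ioo_subset_Ioc_self hx)).differentiableWithinAt)
    fun c hc v hv => norm_cpow_mul_kernel_slantLine_le q hc hv).symm

theorem riemannIntegral_neg_eq_mellin {q : ℂ} (hq : 1 < q.re) :
    riemannIntegral 0 (-q) = (1 + I) * ((1 + I) ^ q - (-(1 + I)) ^ q) *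
      mellin (fun r : ℝ => kernel ((1 + I) * r)) (q + 1) := by
  have integrable := integrable_cpow_mul_kernel_slantLine_zero hq
  have on_ray : ∀ {z : ℂ}, z ≠ 0 → ∀ r ∈ Ioi (0 : ℝ),
      (r * z) ^ q * kernel ((1 + I) * r) =
        z ^ q * ((r : ℂ) ^ (q + 1 - 1) • kernel ((1 + I) * r)) := by
    intro z hz r hr
    rw [ofReal_mul_cpow hr hz, add_sub_cancel_right, smul_eq_mul]
    ring
  have right_half : ∫ v in Ioi (0 : ℝ), slantLine 0 v ^ q * kernel (slantLine 0 v) =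
      (1 + I) ^ q * mellin (fun r : ℝ => kernel ((1 + I) * r)) (q + 1) := by
    rw [mellin, ← integral_const_mul]
    refine setIntegral_congr_fun measurableSet_Ioi fun r hr => ?_
    have line_pos : slantLine 0 r = (1 + I) * r := by simp [slantLine]
    simp only [← on_ray one_add_I_ne_zero r hr, line_pos, mul_comm (r : ℂ) (1 + I)]
  have left_half : ∫ v in Iic (0 : ℝ), slantLine 0 v ^ q * kernel (slantLine 0 v) =
      -((-(1 + I)) ^ q * mellin (fun r : ℝ => kernel ((1 + I) * r)) (q + 1)) := by
    have reflect := integral_comp_neg_Iic 0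
      fun v : ℝ => slantLine 0 (-v) ^ q * kernel (slantLine 0 (-v))
    simp only [neg_neg, neg_zero] at reflect
    rw [reflect, mellin, ← integral_const_mul, ← integral_neg]
    refine setIntegral_congr_fun measurableSet_Ioi fun r hr => ?_
    have line_neg : slantLine 0 (-r) = -((1 + I) * r) := by simp [slantLine]
    simp only [← on_ray (neg_ne_zero.mpr one_add_I_ne_zero) r hr, line_neg, kernel_neg, mul_neg,
      mul_comm (r : ℂ) (1 + I)]
  rw [riemannIntegral_neg_eq_slantIntegral_zero hq, slantIntegral, integral_const_mul,
    ← intervalIntegral.integral_Iic_add_Ioi (b := 0) integrable.integrableOn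
      integrable.integrableOn, right_half, left_half]
  ring

theorem conj_mellin (f : ℝ → ℂ) (s : ℂ) :
    conj (mellin f (conj s)) = mellin (fun r => conj (f r)) s := by
  rw [mellin, mellin, ← integral_conj]
  refine setIntegral_congr_fun measurableSet_Ioi fun r (hr : 0 < r) => ?_
  have arg_ne : (r : ℂ).arg ≠ Real.pi := by
    rw [arg_ofReal_of_nonneg hr.le]
    exact Real.pi_ne_zero.symm
  have power := cpow_conj (r : ℂ) (s - 1) arg_ne
  rw [map_sub, map_one, conj_ofReal] at power
  simp only [smul_eq_mul, map_mul, power, conj_conj]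

theorem log_one_add_I : log (1 + I) = Real.log (Real.sqrt 2) + (Real.pi / 4 : ℝ) * I := by
  rw [one_add_I_eq_sqrt_two_mul_exp, log_ofReal_mul (by positivity) (exp_ne_zero _), log_exp] <;>
    rw [im_ofReal_mul, I_im] <;> linarith [Real.pi_pos]

theorem log_neg_one_add_I :
    log (-(1 + I)) = Real.log (Real.sqrt 2) + (-(3 * Real.pi / 4) : ℝ) * I := by
  have polar : -(1 + I) = (Real.sqrt 2 : ℝ) * cexp ((-(3 * Real.pi / 4) : ℝ) * I) := by
    have rotate : ((Real.pi / 4 : ℝ) : ℂ) * I = (-(3 * Real.pi / 4) : ℝ) * I + Real.pi * I := by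
      push_cast
      ring
    rw [one_add_I_eq_sqrt_two_mul_exp, rotate, exp_add_pi_mul_I, mul_neg, neg_neg]
  rw [polar, log_ofReal_mul (by positivity) (exp_ne_zero _), log_exp] <;>
    rw [im_ofReal_mul, I_im] <;> linarith [Real.pi_pos]

theorem conj_one_add_I_cpow_sub (s : ℂ) :
    conj ((1 + I) * ((1 + I) ^ (conj s - 1) - (-(1 + I)) ^ (conj s - 1))) *
      rayFrequency ^ (-s) =
    2 * Complex.cos (Real.pi * s / 2) * (2 * Real.pi) ^ (-s) := by
  have hk := one_add_I_ne_zero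
  have absorb : (1 + I) * ((1 + I) ^ (conj s - 1) - (-(1 + I)) ^ (conj s - 1)) =
      (1 + I) ^ conj s + (-(1 + I)) ^ conj s := by
    rw [cpow_sub _ _ hk, cpow_sub _ _ (neg_ne_zero.mpr hk), cpow_one, cpow_one]
    field_simp
    ring
  rw [absorb, rayFrequency, ofReal_mul_cpow (by positivity) hk, cpow_def_of_ne_zero hk,
    cpow_def_of_ne_zero (neg_ne_zero.mpr hk), cpow_def_of_ne_zero hk, log_one_add_I,
    log_neg_one_add_I, map_add, ← exp_conj, ← exp_conj, Complex.cos]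
  simp only [map_mul, map_add, conj_conj, conj_ofReal, conj_I]
  rw [mul_div_cancel₀ _ two_ne_zero, mul_left_comm, add_mul, ← Complex.exp_add,
    ← Complex.exp_add, add_comm (cexp _), mul_comm]
  congr 3 <;> push_cast <;> ring

theorem conj_riemannIntegral_of_two_lt_re {s : ℂ} (hs : 2 < s.re) :
    conj (riemannIntegral 0 (1 - conj s)) = 2 * Complex.cos (Real.pi * s / 2) *
      (2 * Real.pi) ^ (-s) * -(Gamma s * (riemannIntegral 0 s + riemannZeta s)) := by
  have reflected := riemannIntegral_neg_eq_mellin (q := conj s - 1) (by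
    rw [sub_re, conj_re, one_re]
    linarith)
  rw [neg_sub, sub_add_cancel] at reflected
  rw [reflected, map_mul, conj_mellin, mellin_conj_kernel (by linarith),
    ← conj_one_add_I_cpow_sub]
  ring

theorem conj_riemannIntegral {s : ℂ} (hs : 0 < s.im) :
    conj (riemannIntegral 0 (1 - conj s)) = 2 * Complex.cos (Real.pi * s / 2) *
      (2 * Real.pi) ^ (-s) * -(Gamma s * (riemannIntegral 0 s + riemannZeta s)) := by
  have isOpen_halfPlane : IsOpen {z : ℂ | 0 < z.im} := isOpen_lt continuous_const continuous_im
  refine AnalyticOnNhd.eqOn_of_preconnected_of_eventuallyEq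
    (f := fun s => conj (riemannIntegral 0 (1 - conj s)))
    (g := fun s => 2 * Complex.cos (Real.pi * s / 2) *
      (2 * Real.pi) ^ (-s) * -(Gamma s * (riemannIntegral 0 s + riemannZeta s)))
    (DifferentiableOn.analyticOnNhd (fun z _ => ?_) isOpen_halfPlane)
    (DifferentiableOn.analyticOnNhd (fun z hz => ?_) isOpen_halfPlane)
    (convex_halfSpace_im_gt 0).isPreconnected (show 0 < (3 + I : ℂ).im by simp) ?_ hs
  · have outer : DifferentiableAt ℂ (fun z => riemannIntegral 0 (1 - z)) (conj z) :=
      (hasDerivAt_riemannIntegral 0 _).differentiableAt.comp _ (by fun_prop)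
    simpa only [conj_conj] using! outer.conj_conj.differentiableWithinAt
  · have im_pos : 0 < z.im := hz
    have gamma : DifferentiableAt ℂ Gamma z :=
      differentiableAt_Gamma z fun m h => by simp [h] at im_pos
    have zeta : DifferentiableAt ℂ riemannZeta z :=
      differentiableAt_riemannZeta fun h => by simp [h] at im_pos
    have power : DifferentiableAt ℂ (fun z => (2 * Real.pi : ℂ) ^ (-z)) z :=
      differentiableAt_id.neg.const_cpow (Or.inl (by simp [Real.pi_ne_zero]))
    exact (((by fun_prop : DifferentiableAt ℂ (fun z => 2 * Complex.cos (Real.pi * z / 2)) z).mul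
      power).mul (gamma.mul
        ((hasDerivAt_riemannIntegral 0 z).differentiableAt.add zeta)).neg).differentiableWithinAt
  · filter_upwards [(isOpen_lt continuous_const continuous_re).mem_nhds
      (show (2 : ℝ) < (3 + I : ℂ).re by norm_num)] with z hz
    exact conj_riemannIntegral_of_two_lt_re hz

/-! ### The Hardy function -/

/-- The phase `e^{iϑ(t)}`, which turns `ζ(1/2 + it)` into the real number `Z(t)`. -/
noncomputable def thetaPhase (t : ℝ) : ℂ := cexp (I * riemannSiegelTheta t)

theorem norm_thetaPhase (t : ℝ) : ‖thetaPhase t‖ = 1 := by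
  rw [thetaPhase, mul_comm]
  exact norm_exp_ofReal_mul_I _

theorem thetaPhase_mul_conj (t : ℝ) : thetaPhase t * conj (thetaPhase t) = 1 := by
  rw [mul_conj', norm_thetaPhase, ofReal_one, one_pow]

theorem Gammaℝ_critical_line (t : ℝ) : Gammaℝ (1 / 2 + I * t) =
    (Real.pi : ℂ) ^ (-(1 / 2 + I * t) / 2) * Gamma (1 / 4 + I * (t / 2)) := by
  rw [Gammaℝ_def]
  congr 2
  ring

theorem Gammaℝ_critical_line_ne_zero (t : ℝ) : Gammaℝ (1 / 2 + I * t) ≠ 0 :=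
  Gammaℝ_ne_zero_of_re_pos (by simp)

theorem Gammaℝ_eq_norm_mul_thetaPhase (t : ℝ) :
    Gammaℝ (1 / 2 + I * t) = ‖Gammaℝ (1 / 2 + I * t)‖ * thetaPhase t := by
  have power : (Real.pi : ℂ) ^ (-(1 / 2 + I * t) / 2) =
      ‖(Real.pi : ℂ) ^ (-(1 / 2 + I * t) / 2)‖ * cexp (I * (-(t / 2) * Real.log Real.pi : ℝ)) := by
    have exponent_re : (-(1 / 2 + I * t) / 2 : ℂ).re = -(1 / 4) := by norm_num
    rw [norm_cpow_eq_rpow_re_of_pos Real.pi_pos, exponent_re, Real.rpow_def_of_pos Real.pi_pos,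
      cpow_def_of_ne_zero (ofReal_ne_zero.mpr Real.pi_ne_zero), ofReal_exp, ← Complex.exp_add,
      ← ofReal_log Real.pi_pos.le]
    congr 1
    push_cast
    ring
  have gamma := norm_mul_exp_arg_mul_I (Gamma (1 / 4 + I * (t / 2)))
  have phase : thetaPhase t = cexp (I * (-(t / 2) * Real.log Real.pi : ℝ)) *
      cexp ((Gamma (1 / 4 + I * (t / 2))).arg * I) := by
    rw [thetaPhase, riemannSiegelTheta, log_im, ← Complex.exp_add]
    congr 1
    push_cast
    ring
  rw [Gammaℝ_critical_line, norm_mul, ofReal_mul, phase, mul_mul_mul_comm, ← power, gamma]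

theorem Gammaℝ_conj (s : ℂ) : Gammaℝ (conj s) = conj (Gammaℝ s) := by
  have arg_ne : (Real.pi : ℂ).arg ≠ Real.pi := by
    rw [arg_ofReal_of_nonneg Real.pi_pos.le]
    exact Real.pi_ne_zero.symm
  have power := cpow_conj (Real.pi : ℂ) (-s / 2) arg_ne
  have half : conj s / 2 = conj (s / 2) := by rw [map_div₀, conj_ofNat]
  rw [map_div₀, map_neg, conj_ofReal, conj_ofNat] at power
  rw [Gammaℝ_def, Gammaℝ_def, map_mul, ← Gamma_conj, power, half]

theorem one_sub_critical_line (t : ℝ) : (1 - (1 / 2 + I * t) : ℂ) = conj (1 / 2 + I * t) := by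
  simp only [map_add, map_div₀, map_one, conj_ofNat, map_mul, conj_I, conj_ofReal]
  ring

theorem Gammaℝ_div_Gammaℝ_one_sub_critical_line (t : ℝ) :
    Gammaℝ (1 / 2 + I * t) / Gammaℝ (1 - (1 / 2 + I * t)) = thetaPhase t ^ 2 := by
  have norm_ne : (‖Gammaℝ (1 / 2 + I * t)‖ : ℂ) ≠ 0 :=
    ofReal_ne_zero.mpr (norm_ne_zero_iff.mpr (Gammaℝ_critical_line_ne_zero t))
  have conj_ne : conj (thetaPhase t) ≠ 0 := by
    rw [Ne, map_eq_zero]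
    exact exp_ne_zero _
  rw [one_sub_critical_line, Gammaℝ_conj, Gammaℝ_eq_norm_mul_thetaPhase, map_mul, conj_ofReal,
    mul_div_mul_left _ _ norm_ne, div_eq_iff conj_ne, sq, mul_assoc, thetaPhase_mul_conj, mul_one]

theorem conj_riemannIntegral_critical_line {t : ℝ} (ht : 0 < t) :
    conj (riemannIntegral 0 (1 / 2 + I * t)) = -(thetaPhase t ^ 2 *
      (riemannIntegral 0 (1 / 2 + I * t) + riemannZeta (1 / 2 + I * t))) := by
  have reflected := conj_riemannIntegral (s := 1 / 2 + I * t) (by simpa using ht)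
  have factor := Gammaℝ_div_Gammaℝ_one_sub (s := 1 / 2 + I * t) fun n h =>
    ht.ne' (by simpa using congrArg im h)
  rw [Gammaℝ_div_Gammaℝ_one_sub_critical_line, Gammaℂ_def] at factor
  rw [← one_sub_critical_line, sub_sub_cancel] at reflected
  rw [reflected, factor]
  ring

theorem hardyZ_eq_riemannIntegral_zero {t : ℝ} (ht : 0 < t) :
    hardyZ t = -2 * (thetaPhase t * riemannIntegral 0 (1 / 2 + I * t)).re := by
  have split : thetaPhase t * riemannZeta (1 / 2 + I * t) =
      -conj (thetaPhase t * riemannIntegral 0 (1 / 2 + I * t)) -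
        thetaPhase t * riemannIntegral 0 (1 / 2 + I * t) := by
    rw [map_mul, conj_riemannIntegral_critical_line ht]
    linear_combination (-thetaPhase t * (riemannIntegral 0 (1 / 2 + I * t) +
      riemannZeta (1 / 2 + I * t))) * thetaPhase_mul_conj t
  rw [hardyZ, ← thetaPhase, split, sub_re, neg_re, conj_re]
  ring

theorem hardyZ_eq_riemannIntegral (N : ℕ) {t : ℝ} (ht : 0 < t) :
    hardyZ t = 2 * (thetaPhase t * ((∑ k ∈ Finset.Ico 1 (N + 1), (k : ℂ) ^ (-(1 / 2 + I * t))) -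
      riemannIntegral N (1 / 2 + I * t))).re := by
  rw [hardyZ_eq_riemannIntegral_zero ht, riemannIntegral_eq_add_sum N, sub_add_cancel_right,
    mul_neg, neg_re]
  ring

/-! ### Saddle point bounds -/

theorem norm_slantIntegral_le {h : ℂ → ℂ} {c B : ℝ}
    (hB : ∀ v, ‖h (slantLine c v)‖ ≤ B * Real.exp (-v ^ 2)) : ‖slantIntegral h c‖ ≤ 4 * B := by
  have B_nonneg : 0 ≤ B := by simpa using (norm_nonneg _).trans (hB 0)
  have gaussian := norm_integral_le_of_norm_le
    ((integrable_exp_neg_mul_sq one_pos).const_mul B) (ae_of_all volume fun v => by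
      simpa using hB v)
  rw [integral_const_mul, integral_gaussian, div_one] at gaussian
  have norm_direction : ‖1 + I‖ ≤ 2 := (norm_add_le _ _).trans (by norm_num)
  have sqrt_pi : √Real.pi ≤ 2 := by
    rw [Real.sqrt_le_left two_pos.le]
    linarith [Real.pi_lt_four]
  rw [slantIntegral, integral_const_mul, norm_mul]
  calc ‖1 + I‖ * ‖∫ v, h (slantLine c v)‖ ≤ 2 * (B * 2) :=
        mul_le_mul norm_direction (gaussian.trans (by gcongr)) (norm_nonneg _) two_pos.le
    _ = 4 * B := by ring

theorem exp_neg_pi_mul_sq_add_le (a v : ℝ) :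
    Real.exp (-Real.pi * v ^ 2 + a * |v|) ≤ Real.exp (a ^ 2) * Real.exp (-v ^ 2) := by
  rw [← Real.exp_add, Real.exp_le_exp, ← sq_abs v]
  nlinarith [Real.pi_gt_three, sq_nonneg (a - |v|), sq_nonneg a, sq_nonneg |v|]

theorem half_le_norm_slantLine (c v : ℝ) : c / 2 ≤ ‖slantLine c v‖ := by
  refine (le_abs_self _).trans (abs_le_of_sq_le_sq ?_ (norm_nonneg _))
  rw [← normSq_eq_norm_sq, normSq_apply, slantLine_re, slantLine_im]
  nlinarith [sq_nonneg (c + 2 * v), sq_nonneg c]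

theorem slantLine_ne_zero {c : ℝ} (hc : 0 < c) (v : ℝ) : slantLine c v ≠ 0 :=
  norm_pos_iff.mp ((half_pos hc).trans_le (half_le_norm_slantLine c v))

theorem arg_slantLine {c : ℝ} (hc : 0 < c) (v : ℝ) :
    (slantLine c v).arg = (slantLine 1 (v / c)).arg := by
  rw [← arg_real_mul (slantLine 1 (v / c)) hc]
  congr 1
  rw [slantLine, slantLine, ofReal_div, mul_add, ofReal_one, mul_one, mul_left_comm,
    mul_div_cancel₀ _ (ofReal_ne_zero.mpr hc.ne')]

theorem hasDerivAt_arg_slantLine_one (r : ℝ) :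
    HasDerivAt (fun r => (slantLine 1 r).arg) (1 / (1 + 2 * r + 2 * r ^ 2)) r := by
  have line : HasDerivAt (slantLine 1) (1 + I) r :=
    (((hasDerivAt_id r).ofReal_comp.const_mul (1 + I)).const_add _).congr_deriv (by simp)
  have log_line := imCLM.hasFDerivAt.comp_hasDerivAt r
    (line.clog_real (slantHalfPlane_subset_slitPlane (slantLine_mem_slantHalfPlane one_pos r)))
  have normSq_line : normSq (slantLine 1 r) = 1 + 2 * r + 2 * r ^ 2 := by
    rw [normSq_apply, slantLine_re, slantLine_im]
    ring
  have slope : imCLM ((1 + I) / slantLine 1 r) = 1 / (1 + 2 * r + 2 * r ^ 2) := by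
    rw [imCLM_apply, div_im, normSq_line, slantLine_re, slantLine_im, ← sub_div]
    simp
  rw [slope] at log_line
  simpa only [Function.comp_def, imCLM_apply, log_im] using log_line

theorem arg_slantLine_one_zero : (slantLine 1 0).arg = 0 := by simp [slantLine]

theorem one_half_le_one_add_two_mul_add_sq (r : ℝ) : 1 / 2 ≤ 1 + 2 * r + 2 * r ^ 2 := by
  nlinarith [sq_nonneg (2 * r + 1)]

theorem abs_arg_slantLine_one_le (r : ℝ) : |(slantLine 1 r).arg| ≤ 2 * |r| := by
  have lipschitz := convex_univ.norm_image_sub_le_of_norm_hasDerivWithin_le (C := 2)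
    (fun x _ => (hasDerivAt_arg_slantLine_one x).hasDerivWithinAt) (fun x _ => ?_)
    (mem_univ 0) (mem_univ r)
  · simpa [arg_slantLine_one_zero] using lipschitz
  · have lower := one_half_le_one_add_two_mul_add_sq x
    rw [Real.norm_of_nonneg (by positivity), div_le_iff₀ (by linarith)]
    linarith

theorem arg_slantLine_one_le (r : ℝ) : (slantLine 1 r).arg ≤ r + r ^ 2 / 2 := by
  set gap : ℝ → ℝ := fun r => r + r ^ 2 / 2 - (slantLine 1 r).arg with gap_def
  have gap_deriv : ∀ r, HasDerivAt gap
      (r * ((3 + 4 * r + 2 * r ^ 2) / (1 + 2 * r + 2 * r ^ 2))) r := fun r => by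
    have lower := one_half_le_one_add_two_mul_add_sq r
    refine (((hasDerivAt_id r).add (((hasDerivAt_id r).pow 2).div_const 2)).sub
      (hasDerivAt_arg_slantLine_one r)).congr_deriv ?_
    simp only [id]
    field_simp
    ring
  have factor_nonneg : ∀ r : ℝ, 0 ≤ (3 + 4 * r + 2 * r ^ 2) / (1 + 2 * r + 2 * r ^ 2) := fun r =>
    div_nonneg (by nlinarith [sq_nonneg (r + 1)])
      (by linarith [one_half_le_one_add_two_mul_add_sq r])
  have gap_continuous : Continuous gap :=
    continuous_iff_continuousAt.mpr fun r => (gap_deriv r).continuousAt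
  have gap_zero : gap 0 = 0 := by simp [gap_def, arg_slantLine_one_zero]
  suffices gap 0 ≤ gap r by rwa [gap_zero, gap_def, sub_nonneg] at this
  rcases le_total 0 r with hr | hr
  · refine monotoneOn_of_hasDerivWithinAt_nonneg (convex_Ici 0) gap_continuous.continuousOn
      (fun x _ => (gap_deriv x).hasDerivWithinAt) (fun x hx => ?_) self_mem_Ici hr hr
    rw [interior_Ici] at hx
    exact mul_nonneg hx.le (factor_nonneg x)
  · refine antitoneOn_of_hasDerivWithinAt_nonpos (convex_Iic 0) gap_continuous.continuousOn
      (fun x _ => (gap_deriv x).hasDerivWithinAt) (fun x hx => ?_) hr self_mem_Iic hr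
    rw [interior_Iic] at hx
    exact mul_nonpos_of_nonpos_of_nonneg hx.le (factor_nonneg x)

-- The terms of first order in `v` cancel when `τ = 2 * π * c ^ 2`: the line through `c` is then a
-- path of steepest descent.
theorem mul_arg_slantLine_sub_le {c τ K : ℝ} (hc : 0 < c)
    (hτ : |τ - 2 * Real.pi * c ^ 2| ≤ K * c) (v : ℝ) :
    τ * (slantLine c v).arg - 2 * Real.pi * ((c + v) * v) ≤ -Real.pi * v ^ 2 + 2 * K * |v| := by
  rw [arg_slantLine hc]
  set φ := (slantLine 1 (v / c)).arg
  have deviation : (τ - 2 * Real.pi * c ^ 2) * φ ≤ 2 * K * |v| :=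
    calc (τ - 2 * Real.pi * c ^ 2) * φ ≤ |τ - 2 * Real.pi * c ^ 2| * |φ| := by
          rw [← abs_mul]
          exact le_abs_self _
      _ ≤ K * c * (2 * |v / c|) :=
          mul_le_mul hτ (abs_arg_slantLine_one_le _) (abs_nonneg _) ((abs_nonneg _).trans hτ)
      _ = 2 * K * |v| := by
          rw [abs_div, abs_of_pos hc]
          field_simp
  have descent : 2 * Real.pi * c ^ 2 * φ ≤ 2 * Real.pi * (c * v + v ^ 2 / 2) :=
    calc 2 * Real.pi * c ^ 2 * φ ≤ 2 * Real.pi * c ^ 2 * (v / c + (v / c) ^ 2 / 2) := by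
          gcongr
          exact arg_slantLine_one_le _
      _ = 2 * Real.pi * (c * v + v ^ 2 / 2) := by field_simp
  linarith

theorem norm_cpow_neg_mul_kernel_le {N : ℕ} {s : ℂ} {K : ℝ} (hs : 0 ≤ s.re)
    (hK : |s.im - 2 * Real.pi * (N + 1 / 2) ^ 2| ≤ K * (N + 1 / 2)) (v : ℝ) :
    ‖slantLine (N + 1 / 2) v ^ (-s) * kernel (slantLine (N + 1 / 2) v)‖ ≤
      ((N + 1 / 2) / 2) ^ (-s.re) * Real.exp (-Real.pi * v ^ 2 + 2 * K * |v|) := by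
  have hc : (0 : ℝ) < N + 1 / 2 := by positivity
  have norm_power : ‖slantLine (N + 1 / 2) v ^ (-s)‖ = ‖slantLine (N + 1 / 2) v‖ ^ (-s.re) *
      Real.exp (s.im * (slantLine (N + 1 / 2) v).arg) := by
    rw [norm_cpow_of_ne_zero (slantLine_ne_zero hc v), neg_re, neg_im, div_eq_mul_inv,
      ← Real.exp_neg, mul_neg, neg_neg, mul_comm s.im]
  have norm_kernel := norm_kernel_le (one_le_norm_kernelDenom_slantLine N v)
  rw [slantLine_re, slantLine_im] at norm_kernel
  rw [norm_mul, norm_power, mul_assoc]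
  refine mul_le_mul ?_ ?_ (by positivity) (by positivity)
  · exact Real.rpow_le_rpow_of_nonpos (by positivity) (half_le_norm_slantLine _ v)
      (neg_nonpos.mpr hs)
  · refine (mul_le_mul_of_nonneg_left norm_kernel (Real.exp_pos _).le).trans ?_
    rw [← Real.exp_add, Real.exp_le_exp, ← sub_eq_add_neg]
    exact mul_arg_slantLine_sub_le hc hK v

theorem norm_riemannIntegral_le {N : ℕ} {s : ℂ} {K : ℝ} (hs : 0 ≤ s.re)
    (hK : |s.im - 2 * Real.pi * (N + 1 / 2) ^ 2| ≤ K * (N + 1 / 2)) :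
    ‖riemannIntegral N s‖ ≤ 4 * (((N + 1 / 2) / 2) ^ (-s.re) * Real.exp ((2 * K) ^ 2)) := by
  refine norm_slantIntegral_le fun v => (norm_cpow_neg_mul_kernel_le hs hK v).trans ?_
  exact (mul_le_mul_of_nonneg_left (exp_neg_pi_mul_sq_add_le _ v) (by positivity)).trans_eq
    (mul_assoc _ _ _).symm

theorem norm_log_slantLine_le {c : ℝ} (hc : 1 ≤ c) (v : ℝ) :
    ‖log (slantLine c v)‖ ≤ (Real.log c + 5) * Real.exp (2 * |v|) := by
  have c_pos : 0 < c := one_pos.trans_le hc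
  have log_nonneg : 0 ≤ Real.log c := Real.log_nonneg hc
  have upper : Real.log ‖slantLine c v‖ ≤ Real.log c + 2 * |v| := by
    have norm_le : ‖slantLine c v‖ ≤ c * (1 + 2 * |v|) := by
      have := norm_slantLine_le c v
      rw [abs_of_pos c_pos] at this
      nlinarith [abs_nonneg v]
    refine (Real.log_le_log (norm_pos_iff.mpr (slantLine_ne_zero c_pos v)) norm_le).trans ?_
    rw [Real.log_mul c_pos.ne' (by positivity)]
    linarith [Real.log_le_sub_one_of_pos (show 0 < 1 + 2 * |v| by positivity)]
  have lower : Real.log c - 1 ≤ Real.log ‖slantLine c v‖ := by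
    refine le_trans ?_ (Real.log_le_log (half_pos c_pos) (half_le_norm_slantLine c v))
    rw [Real.log_div c_pos.ne' two_ne_zero]
    linarith [Real.log_two_lt_d9]
  calc ‖log (slantLine c v)‖ ≤ |Real.log ‖slantLine c v‖| + |(slantLine c v).arg| := by
        simpa only [log_re, log_im] using norm_le_abs_re_add_abs_im (log (slantLine c v))
    _ ≤ (Real.log c + 2 * |v| + 1) + 4 :=
        add_le_add (abs_le.mpr ⟨by linarith [abs_nonneg v], by linarith⟩)
          ((abs_arg_le_pi _).trans Real.pi_lt_four.le)
    _ ≤ (Real.log c + 5) * Real.exp (2 * |v|) := by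
        nlinarith [Real.add_one_le_exp (2 * |v|), abs_nonneg v]

theorem norm_riemannIntegralDeriv_le {N : ℕ} {s : ℂ} {K : ℝ} (hN : 1 ≤ N) (hs : 0 ≤ s.re)
    (hK : |s.im - 2 * Real.pi * (N + 1 / 2) ^ 2| ≤ K * (N + 1 / 2)) :
    ‖riemannIntegralDeriv N s‖ ≤ 4 * ((Real.log (N + 1 / 2) + 5) *
      ((N + 1 / 2) / 2) ^ (-s.re) * Real.exp ((2 * K + 2) ^ 2)) := by
  have hc : (1 : ℝ) ≤ N + 1 / 2 := by linarith [Nat.one_le_cast (α := ℝ).mpr hN]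
  have log_nonneg := Real.log_nonneg hc
  refine norm_slantIntegral_le fun v => ?_
  rw [mul_assoc, norm_mul, norm_neg]
  calc _ ≤ (Real.log (N + 1 / 2) + 5) * Real.exp (2 * |v|) * (((N + 1 / 2) / 2) ^ (-s.re) *
          Real.exp (-Real.pi * v ^ 2 + 2 * K * |v|)) :=
        mul_le_mul (norm_log_slantLine_le hc v) (norm_cpow_neg_mul_kernel_le hs hK v)
          (norm_nonneg _) (by positivity)
    _ = (Real.log (N + 1 / 2) + 5) * ((N + 1 / 2) / 2) ^ (-s.re) *
          Real.exp (-Real.pi * v ^ 2 + (2 * K + 2) * |v|) := by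
        rw [add_mul (2 * K), ← add_assoc, Real.exp_add _ (2 * |v|)]
        ring
    _ ≤ (Real.log (N + 1 / 2) + 5) * ((N + 1 / 2) / 2) ^ (-s.re) *
          (Real.exp ((2 * K + 2) ^ 2) * Real.exp (-v ^ 2)) := by
        gcongr
        exact exp_neg_pi_mul_sq_add_le _ v
    _ = _ := by ring

/-! ### The digamma function -/

theorem tendsto_circleIntegral_of_norm_le {ι : Type*} {l : Filter ι} [l.IsCountablyGenerated]
    {F : ι → ℂ → ℂ} {f : ℂ → ℂ} {c : ℂ} {r M : ℝ} (hr : 0 ≤ r)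
    (hF : ∀ᶠ i in l, ContinuousOn (F i) (Metric.sphere c r))
    (hM : ∀ᶠ i in l, ∀ z ∈ Metric.sphere c r, ‖F i z‖ ≤ M)
    (lim : ∀ z ∈ Metric.sphere c r, Tendsto (fun i => F i z) l (𝓝 (f z))) :
    Tendsto (fun i => ∮ z in C(c, r), F i z) l (𝓝 (∮ z in C(c, r), f z)) := by
  have mem_sphere : ∀ θ, circleMap c r θ ∈ Metric.sphere c r := circleMap_mem_sphere c hr
  refine intervalIntegral.tendsto_integral_filter_of_dominated_convergence (fun _ => r * M)
    ?_ ?_ intervalIntegrable_const ?_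
  · filter_upwards [hF] with i hFi
    simp only [deriv_circleMap]
    exact (((continuous_circleMap 0 r).mul continuous_const).smul
      (hFi.comp_continuous (continuous_circleMap c r) mem_sphere)).aestronglyMeasurable
  · filter_upwards [hM] with i hMi
    refine Eventually.of_forall fun θ _ => ?_
    rw [norm_smul, deriv_circleMap, norm_mul, norm_I, mul_one, norm_circleMap_zero,
      abs_of_nonneg hr]
    exact mul_le_mul_of_nonneg_left (hMi _ (mem_sphere θ)) hr
  · exact Eventually.of_forall fun θ _ => (lim _ (mem_sphere θ)).const_smul _

theorem tendsto_deriv_of_norm_le {ι : Type*} {l : Filter ι} [l.IsCountablyGenerated]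
    {F : ι → ℂ → ℂ} {f : ℂ → ℂ} {c : ℂ} {r M : ℝ} (hr : 0 < r)
    (hF : ∀ᶠ i in l, DifferentiableOn ℂ (F i) (Metric.closedBall c r))
    (hf : DifferentiableOn ℂ f (Metric.closedBall c r))
    (hM : ∀ᶠ i in l, ∀ z ∈ Metric.sphere c r, ‖F i z‖ ≤ M)
    (lim : ∀ z ∈ Metric.sphere c r, Tendsto (fun i => F i z) l (𝓝 (f z))) :
    Tendsto (fun i => deriv (F i) c) l (𝓝 (deriv f c)) := by
  have cauchy : ∀ g : ℂ → ℂ, DifferentiableOn ℂ g (Metric.closedBall c r) →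
      deriv g c = (2 * Real.pi * I)⁻¹ • ∮ z in C(c, r), (1 / (z - c) ^ 2) • g z := fun g hg => by
    rw [hg.deriv_eq_smul_circleIntegral hr, inv_smul_smul₀ two_pi_I_ne_zero]
  rw [cauchy f hf]
  have norm_sub : ∀ z ∈ Metric.sphere c r, ‖z - c‖ = r := fun z hz => mem_sphere_iff_norm.mp hz
  refine Tendsto.congr' (hF.mono fun i hFi => (cauchy _ hFi).symm) (Tendsto.const_smul ?_ _)
  refine tendsto_circleIntegral_of_norm_le (M := 1 / r ^ 2 * M) hr.le ?_ ?_ ?_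
  · filter_upwards [hF] with i hFi
    have weight : ContinuousOn (fun z => 1 / (z - c) ^ 2) (Metric.sphere c r) :=
      continuousOn_const.div (by fun_prop) fun z hz =>
        pow_ne_zero 2 (norm_pos_iff.mp ((norm_sub z hz).symm ▸ hr))
    exact weight.smul (hFi.continuousOn.mono Metric.sphere_subset_closedBall)
  · filter_upwards [hM] with i hMi z hz
    rw [norm_smul, norm_div, norm_one, norm_pow, norm_sub z hz]
    exact mul_le_mul_of_nonneg_left (hMi z hz) (by positivity)
  · exact fun z hz => (lim z hz).const_smul _

theorem norm_GammaSeq_le {s : ℂ} (hs : 0 < s.re) {n : ℕ} (hn : n ≠ 0) :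
    ‖GammaSeq s n‖ ≤ Real.Gamma s.re := by
  have integrable : IntegrableOn (fun x : ℝ => Real.exp (-x) * x ^ (s.re - 1)) (Ioi 0) :=
    Real.GammaIntegral_convergent hs
  rw [GammaSeq_eq_approx_Gamma_integral hs hn, intervalIntegral.integral_of_le (by positivity),
    Real.Gamma_eq_integral hs]
  refine (norm_integral_le_of_norm_le (integrable.mono_set Ioc_subset_Ioi_self) ?_).trans
    (setIntegral_mono_set integrable ?_ Ioc_subset_Ioi_self.eventuallyLE)
  · filter_upwards [ae_restrict_mem measurableSet_Ioc] with x hx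
    have factor_nonneg : 0 ≤ 1 - x / n := sub_nonneg.mpr (div_le_one_of_le₀ hx.2 n.cast_nonneg)
    rw [norm_mul, norm_cpow_eq_rpow_re_of_pos hx.1, norm_real,
      Real.norm_of_nonneg (pow_nonneg factor_nonneg n), sub_re, one_re]
    exact mul_le_mul_of_nonneg_right (Real.one_sub_div_pow_le_exp_neg hx.2)
      (Real.rpow_nonneg hx.1.le _)
  · filter_upwards [ae_restrict_mem measurableSet_Ioi] with x hx
    exact mul_nonneg (Real.exp_pos _).le (Real.rpow_nonneg (le_of_lt hx) _)

/-- The logarithmic derivative of `GammaSeq · n`, an approximation of the digamma function. -/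
noncomputable def digammaSeq (s : ℂ) (n : ℕ) : ℂ :=
  Real.log n - ∑ j ∈ Finset.range (n + 1), 1 / (s + j)

theorem add_natCast_ne_zero {s : ℂ} (hs : 0 < s.re) (j : ℕ) : s + j ≠ 0 := fun h => by
  have re_zero : s.re + j = 0 := by simpa using congrArg re h
  linarith [(j.cast_nonneg : (0 : ℝ) ≤ j)]

theorem differentiableAt_Gamma_of_re_pos {s : ℂ} (hs : 0 < s.re) : DifferentiableAt ℂ Gamma s :=
  differentiableAt_Gamma s fun m h =>
    add_natCast_ne_zero hs m (add_eq_zero_iff_eq_neg.mpr h)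

theorem differentiableAt_GammaSeq {s : ℂ} (hs : 0 < s.re) {n : ℕ} (hn : n ≠ 0) :
    DifferentiableAt ℂ (fun z => GammaSeq z n) s := by
  have power : DifferentiableAt ℂ (fun z : ℂ => (n : ℂ) ^ z) s :=
    differentiableAt_id.const_cpow (Or.inl (Nat.cast_ne_zero.mpr hn))
  exact (power.mul_const _).div (by fun_prop)
    (Finset.prod_ne_zero_iff.mpr fun j _ => add_natCast_ne_zero hs j)

theorem logDeriv_GammaSeq {s : ℂ} (hs : 0 < s.re) {n : ℕ} (hn : n ≠ 0) :
    logDeriv (fun z => GammaSeq z n) s = digammaSeq s n := by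
  have base_ne : (n : ℂ) ≠ 0 := Nat.cast_ne_zero.mpr hn
  have power : HasDerivAt (fun z : ℂ => (n : ℂ) ^ z) ((n : ℂ) ^ s * log n) s := by
    simpa using! (hasDerivAt_id s).const_cpow (Or.inl base_ne)
  have power_ne : (n : ℂ) ^ s ≠ 0 := (cpow_ne_zero_iff_of_exponent_ne_zero fun h => by
    simp [h] at hs).mpr base_ne
  have factorial_ne : (n.factorial : ℂ) ≠ 0 := Nat.cast_ne_zero.mpr n.factorial_ne_zero
  simp only [GammaSeq]
  rw [logDeriv_div (f := fun z => (n : ℂ) ^ z * n.factorial) s (mul_ne_zero power_ne factorial_ne)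
      (Finset.prod_ne_zero_iff.mpr fun j _ => add_natCast_ne_zero hs j)
      (power.differentiableAt.mul_const _) (by fun_prop),
    logDeriv_mul_const s _ factorial_ne,
    logDeriv_prod (fun j _ => add_natCast_ne_zero hs j) (fun j _ => by fun_prop),
    logDeriv_apply, power.deriv, mul_div_cancel_left₀ _ power_ne, digammaSeq, natCast_log]
  congr 1
  refine Finset.sum_congr rfl fun j _ => ?_
  rw [logDeriv_apply, deriv_add_const, deriv_id'']

theorem tendsto_digammaSeq {s : ℂ} (hs : 0 < s.re) :
    Tendsto (digammaSeq s) atTop (𝓝 (digamma s)) := by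
  have re_mem : ∀ z ∈ Metric.closedBall s (s.re / 2), z.re ∈ Icc (s.re / 2) (3 * s.re / 2) := by
    intro z hz
    have close := abs_le.mp ((abs_re_le_norm (z - s)).trans (mem_closedBall_iff_norm.mp hz))
    rw [sub_re] at close
    constructor <;> linarith [close.1, close.2]
  have re_pos : ∀ z ∈ Metric.closedBall s (s.re / 2), 0 < z.re := fun z hz =>
    (half_pos hs).trans_le (re_mem z hz).1
  have continuousOn_Gamma : ContinuousOn Real.Gamma (Icc (s.re / 2) (3 * s.re / 2)) :=
    Real.convexOn_Gamma.continuousOn isOpen_Ioi |>.mono fun x hx => (half_pos hs).trans_le hx.1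
  obtain ⟨M, hM⟩ := isCompact_Icc.bddAbove_image continuousOn_Gamma
  have lim_deriv : Tendsto (fun n => deriv (fun z => GammaSeq z n) s) atTop
      (𝓝 (deriv Gamma s)) := by
    refine tendsto_deriv_of_norm_le (M := M) (half_pos hs) ?_
      (fun z hz => (differentiableAt_Gamma_of_re_pos (re_pos z hz)).differentiableWithinAt) ?_
      fun z _ => GammaSeq_tendsto_Gamma z
    · filter_upwards [eventually_ne_atTop 0] with n hn z hz
      exact (differentiableAt_GammaSeq (re_pos z hz) hn).differentiableWithinAt
    · filter_upwards [eventually_ne_atTop 0] with n hn z hz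
      have hz := Metric.sphere_subset_closedBall hz
      exact (norm_GammaSeq_le (re_pos z hz) hn).trans (hM (mem_image_of_mem _ (re_mem z hz)))
  refine (lim_deriv.div (GammaSeq_tendsto_Gamma s) (Gamma_ne_zero_of_re_pos hs)).congr' ?_
  filter_upwards [eventually_ne_atTop 0] with n hn
  exact logDeriv_GammaSeq hs hn

theorem abs_log_norm_add_one_sub_le {s : ℂ} (hs : 2 ≤ ‖s‖) (hs' : s + 1 ≠ 0) :
    |Real.log ‖s + 1‖ - Real.log ‖s‖ - (1 / s).re| ≤ 1 / ‖s‖ ^ 2 := by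
  have s_ne : s ≠ 0 := norm_pos_iff.mp (two_pos.trans_le hs)
  have norm_inv_le : ‖1 / s‖ ≤ 1 / 2 := by
    rw [norm_div, norm_one]
    exact one_div_le_one_div_of_le two_pos hs
  have log_ratio : Real.log ‖s + 1‖ - Real.log ‖s‖ = (log (1 + 1 / s)).re := by
    rw [log_re, ← Real.log_div (norm_ne_zero_iff.mpr hs') (norm_ne_zero_iff.mpr s_ne), ← norm_div,
      add_div, div_self s_ne]
  rw [log_ratio, ← sub_re]
  calc |(log (1 + 1 / s) - 1 / s).re| ≤ ‖log (1 + 1 / s) - 1 / s‖ := abs_re_le_norm _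
    _ ≤ ‖1 / s‖ ^ 2 * (1 - ‖1 / s‖)⁻¹ / 2 := norm_log_one_add_sub_self_le (by linarith)
    _ ≤ ‖1 / s‖ ^ 2 * 2 / 2 := by
        gcongr
        rw [inv_le_comm₀ (by linarith) two_pos]
        linarith
    _ = 1 / ‖s‖ ^ 2 := by
        rw [norm_div, norm_one]
        ring

theorem one_div_sq_norm_add_natCast_le {s : ℂ} (hs : 0 < s.re) (hs' : 2 ≤ s.im) (j : ℕ) :
    1 / ‖s + j‖ ^ 2 ≤ 2 * (1 / (s.im + j - 1) - 1 / (s.im + (j + 1 : ℕ) - 1)) := by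
  have j_nonneg : (0 : ℝ) ≤ j := j.cast_nonneg
  have norm_sq_ge : (s.im + j) ^ 2 / 2 ≤ ‖s + j‖ ^ 2 := by
    rw [← normSq_eq_norm_sq, normSq_apply, add_re, add_im, natCast_re, natCast_im]
    nlinarith [sq_nonneg (s.im - j), mul_nonneg hs.le j_nonneg, sq_nonneg s.re]
  have pred_pos : 0 < s.im + j - 1 := by linarith
  calc 1 / ‖s + j‖ ^ 2 ≤ 1 / ((s.im + j) ^ 2 / 2) :=
        one_div_le_one_div_of_le (by positivity) norm_sq_ge
    _ = 2 * (1 / ((s.im + j) * (s.im + j))) := by field_simp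
    _ ≤ 2 * (1 / ((s.im + j - 1) * (s.im + j))) := by
        gcongr
        linarith
    _ = 2 * (1 / (s.im + j - 1) - 1 / (s.im + (j + 1 : ℕ) - 1)) := by
        rw [Nat.cast_succ, ← add_assoc, add_sub_cancel_right]
        field_simp
        ring

theorem abs_digammaSeq_re_sub_le {s : ℂ} (hs : 0 < s.re) (hs' : 2 ≤ s.im) (n : ℕ) :
    |(digammaSeq s n).re - (Real.log ‖s‖ + (Real.log n - Real.log ‖s + (n + 1 : ℕ)‖))| ≤
      2 * (1 / (s.im - 1)) := by
  have telescoped : (digammaSeq s n).re -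
      (Real.log ‖s‖ + (Real.log n - Real.log ‖s + (n + 1 : ℕ)‖)) =
        ∑ j ∈ Finset.range (n + 1),
          (Real.log ‖s + (j + 1 : ℕ)‖ - Real.log ‖s + j‖ - (1 / (s + j)).re) := by
    rw [Finset.sum_sub_distrib, Finset.sum_range_sub (fun j : ℕ => Real.log ‖s + j‖), digammaSeq,
      sub_re, ofReal_re, re_sum, Nat.cast_zero, add_zero]
    ring
  have term_le : ∀ j : ℕ,
      |Real.log ‖s + (j + 1 : ℕ)‖ - Real.log ‖s + j‖ - (1 / (s + j)).re| ≤
        2 * (1 / (s.im + j - 1) - 1 / (s.im + (j + 1 : ℕ) - 1)) := fun j => by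
    have two_le : 2 ≤ ‖s + j‖ := hs'.trans (by simpa using im_le_norm (s + j))
    have shift : s + (j + 1 : ℕ) = s + j + 1 := by
      push_cast
      ring
    rw [shift]
    exact (abs_log_norm_add_one_sub_le two_le (shift ▸ add_natCast_ne_zero hs (j + 1))).trans
      (one_div_sq_norm_add_natCast_le hs hs' j)
  have last_nonneg : 0 ≤ 1 / (s.im + (n + 1 : ℕ) - 1) :=
    one_div_nonneg.mpr (by linarith [((n + 1).cast_nonneg : (0 : ℝ) ≤ (n + 1 : ℕ))])
  rw [telescoped]
  refine (Finset.abs_sum_le_sum_abs _ _).trans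
    ((Finset.sum_le_sum fun j _ => term_le j).trans ?_)
  rw [← Finset.mul_sum, Finset.sum_range_sub' (fun j : ℕ => 1 / (s.im + j - 1)), Nat.cast_zero,
    add_zero]
  linarith

theorem tendsto_log_sub_log_norm_add_natCast {s : ℂ} (hs : 0 < s.re) :
    Tendsto (fun n : ℕ => Real.log n - Real.log ‖s + (n + 1 : ℕ)‖) atTop (𝓝 0) := by
  have ratio : Tendsto (fun n : ℕ => (s + 1) / n + 1) atTop (𝓝 (0 + 1)) :=
    (tendsto_const_div_atTop_nhds_zero_nat (s + 1)).add_const 1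
  have log_ratio := ((Real.continuousAt_log (by simp)).tendsto.comp ratio.norm).neg
  rw [zero_add, norm_one, Real.log_one, neg_zero] at log_ratio
  refine log_ratio.congr' ?_
  filter_upwards [eventually_ne_atTop 0] with n hn
  have n_ne : (n : ℂ) ≠ 0 := Nat.cast_ne_zero.mpr hn
  have quotient : (s + 1) / n + 1 = (s + (n + 1 : ℕ)) / n := by
    field_simp
    push_cast
    ring
  rw [Function.comp_apply, quotient, norm_div, norm_natCast,
    Real.log_div (norm_ne_zero_iff.mpr (add_natCast_ne_zero hs _)) (Nat.cast_ne_zero.mpr hn),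
    neg_sub]

theorem abs_digamma_re_sub_log_norm_le {s : ℂ} (hs : 0 < s.re) (hs' : 2 ≤ s.im) :
    |(digamma s).re - Real.log ‖s‖| ≤ 2 * (1 / (s.im - 1)) := by
  have lim := ((continuous_re.tendsto _).comp (tendsto_digammaSeq hs)).sub
    ((tendsto_log_sub_log_norm_add_natCast hs).const_add (Real.log ‖s‖))
  rw [add_zero] at lim
  exact le_of_tendsto lim.abs (Eventually.of_forall (abs_digammaSeq_re_sub_le hs hs'))

theorem abs_digamma_re_sub_log_im_le {s : ℂ} (hs : 0 < s.re) (hs₁ : s.re ≤ 1) (hs' : 2 ≤ s.im) :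
    |(digamma s).re - Real.log s.im| ≤ 5 / s.im := by
  have im_pos : 0 < s.im := two_pos.trans_le hs'
  have im_le : s.im ≤ ‖s‖ := im_le_norm s
  have norm_le : ‖s‖ ≤ s.im + 1 := by
    refine (norm_le_abs_re_add_abs_im s).trans ?_
    rw [abs_of_pos hs, abs_of_pos im_pos]
    linarith
  have log_norm : |Real.log ‖s‖ - Real.log s.im| ≤ 1 / s.im := by
    rw [abs_of_nonneg (sub_nonneg.mpr (Real.log_le_log im_pos im_le)),
      ← Real.log_div (im_pos.trans_le im_le).ne' im_pos.ne']
    refine (Real.log_le_sub_one_of_pos (div_pos (im_pos.trans_le im_le) im_pos)).trans ?_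
    rw [div_sub_one im_pos.ne']
    gcongr
    linarith
  calc |(digamma s).re - Real.log s.im| ≤
        |(digamma s).re - Real.log ‖s‖| + |Real.log ‖s‖ - Real.log s.im| := abs_sub_le _ _ _
    _ ≤ 4 / s.im + 1 / s.im := by
        refine add_le_add ((abs_digamma_re_sub_log_norm_le hs hs').trans ?_) log_norm
        rw [mul_one_div, div_le_div_iff₀ (by linarith) im_pos]
        linarith
    _ = 5 / s.im := by ring

/-! ### The derivatives of the theta function and of the Hardy function -/

/-- The derivative `ϑ'(t)` of the Riemann–Siegel theta function. It is expressed through the digamma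
function because `riemannSiegelTheta`, defined by the principal logarithm, has jumps. -/
noncomputable def thetaDeriv (t : ℝ) : ℝ :=
  -(1 / 2) * Real.log Real.pi + 1 / 2 * (digamma ((1 / 2 + I * t) / 2)).re

theorem hasDerivAt_Gammaℝ {s : ℂ} (hs : 0 < s.re) : HasDerivAt Gammaℝ
    (Gammaℝ s * (-(1 / 2) * Real.log Real.pi + 1 / 2 * digamma (s / 2))) s := by
  have re_pos : 0 < (s / 2).re := by simpa using hs
  have power : HasDerivAt (fun z : ℂ => (Real.pi : ℂ) ^ (-z / 2))
      ((Real.pi : ℂ) ^ (-s / 2) * log Real.pi * (-1 / 2)) s :=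
    ((hasDerivAt_id s).neg.div_const 2).const_cpow
      (Or.inl (ofReal_ne_zero.mpr Real.pi_ne_zero))
  have gamma : HasDerivAt (fun z : ℂ => Gamma (z / 2)) (deriv Gamma (s / 2) * (1 / 2)) s :=
    (differentiableAt_Gamma_of_re_pos re_pos).hasDerivAt.comp s ((hasDerivAt_id s).div_const 2)
  have gamma_ne := Gamma_ne_zero_of_re_pos re_pos
  refine ((power.fun_mul gamma).congr_of_eventuallyEq
    (Eventually.of_forall Gammaℝ_def)).congr_deriv ?_
  rw [Gammaℝ_def, ofReal_log Real.pi_pos.le, digamma_def, logDeriv_apply]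
  field_simp

theorem hasDerivAt_critical_line (t : ℝ) : HasDerivAt (fun t : ℝ => (1 / 2 + I * t : ℂ)) I t := by
  simpa using ((hasDerivAt_id t).ofReal_comp.const_mul I).const_add (1 / 2 : ℂ)

theorem hasDerivAt_norm_of_logDeriv {w : ℝ → ℂ} {L : ℂ} {t : ℝ} (hw : HasDerivAt w (w t * L) t)
    (w_ne : w t ≠ 0) : HasDerivAt (fun t => ‖w t‖) (‖w t‖ * L.re) t := by
  have norm_ne : ‖w t‖ ≠ 0 := norm_ne_zero_iff.mpr w_ne
  have sqrt_deriv := hw.norm_sq.sqrt (pow_ne_zero 2 norm_ne)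
  simp only [Real.sqrt_sq (norm_nonneg _)] at sqrt_deriv
  refine sqrt_deriv.congr_deriv ?_
  have inner_eq : w t * L * conj (w t) = (‖w t‖ ^ 2 : ℝ) * L := by
    rw [mul_right_comm, mul_conj', ofReal_pow]
  rw [Complex.inner, inner_eq, re_ofReal_mul]
  field_simp

theorem hasDerivAt_div_norm_of_logDeriv {w : ℝ → ℂ} {L : ℂ} {t : ℝ}
    (hw : HasDerivAt w (w t * L) t) (w_ne : w t ≠ 0) :
    HasDerivAt (fun t => w t / ‖w t‖) (I * L.im * (w t / ‖w t‖)) t := by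
  have norm_ne : (‖w t‖ : ℂ) ≠ 0 := ofReal_ne_zero.mpr (norm_ne_zero_iff.mpr w_ne)
  refine (hw.fun_div (hasDerivAt_norm_of_logDeriv hw w_ne).ofReal_comp norm_ne).congr_deriv ?_
  conv_lhs => enter [1, 1, 1, 2]; rw [← re_add_im L]
  push_cast
  field_simp
  ring

theorem hasDerivAt_thetaPhase (t : ℝ) :
    HasDerivAt thetaPhase (I * thetaDeriv t * thetaPhase t) t := by
  have w_ne := Gammaℝ_critical_line_ne_zero
  have phase_eq : thetaPhase =
      fun t : ℝ => Gammaℝ (1 / 2 + I * t) / ‖Gammaℝ (1 / 2 + I * t)‖ := by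
    ext t
    rw [eq_div_iff (ofReal_ne_zero.mpr (norm_ne_zero_iff.mpr (w_ne t))), mul_comm]
    exact (Gammaℝ_eq_norm_mul_thetaPhase t).symm
  have gamma := (hasDerivAt_Gammaℝ (s := 1 / 2 + I * t) (by simp)).comp t
    (hasDerivAt_critical_line t)
  rw [mul_assoc] at gamma
  rw [phase_eq]
  refine (hasDerivAt_div_norm_of_logDeriv gamma (w_ne t)).congr_deriv ?_
  have re_eq : (-(1 / 2) * Real.log Real.pi + 1 / 2 * digamma ((1 / 2 + I * t) / 2) : ℂ).re =
      thetaDeriv t := by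
    rw [thetaDeriv]
    simp
  rw [mul_I_im, re_eq, Function.comp_apply]

theorem abs_thetaDeriv_sub_le {t : ℝ} (ht : 4 ≤ t) :
    |thetaDeriv t - 1 / 2 * Real.log (t / (2 * Real.pi))| ≤ 5 / t := by
  have t_pos : 0 < t := by linarith
  have re_eq : ((1 / 2 + I * t : ℂ) / 2).re = 1 / 4 := by
    norm_num
  have im_eq : ((1 / 2 + I * t : ℂ) / 2).im = t / 2 := by simp
  have digamma_bound := abs_digamma_re_sub_log_im_le (s := (1 / 2 + I * t) / 2)
    (by linarith) (by linarith) (by linarith)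
  rw [im_eq] at digamma_bound
  have log_eq : Real.log (t / (2 * Real.pi)) = Real.log (t / 2) - Real.log Real.pi := by
    rw [← Real.log_div (half_pos t_pos).ne' Real.pi_ne_zero, div_div]
  calc |thetaDeriv t - 1 / 2 * Real.log (t / (2 * Real.pi))| =
        1 / 2 * |(digamma ((1 / 2 + I * t) / 2)).re - Real.log (t / 2)| := by
        rw [← abs_of_pos (one_half_pos (α := ℝ)), ← abs_mul, thetaDeriv, log_eq]
        congr 1
        rw [abs_of_pos one_half_pos]
        ring
    _ ≤ 1 / 2 * (5 / (t / 2)) := by gcongr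
    _ = 5 / t := by field_simp

theorem thetaPhase_mul_natCast_cpow_im {k : ℕ} (hk : k ≠ 0) (t : ℝ) :
    (thetaPhase t * (k : ℂ) ^ (-(1 / 2 + I * t))).im =
      1 / Real.sqrt k * Real.sin (riemannSiegelTheta t - t * Real.log k) := by
  have inv_sqrt : 1 / Real.sqrt k = Real.exp (-(1 / 2) * Real.log k) := by
    rw [Real.sqrt_eq_rpow, Real.rpow_def_of_pos (Nat.cast_pos.mpr (Nat.pos_of_ne_zero hk)),
      one_div, ← Real.exp_neg]
    congr 1
    ring
  have polar : thetaPhase t * (k : ℂ) ^ (-(1 / 2 + I * t)) =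
      (Real.exp (-(1 / 2) * Real.log k) : ℝ) *
        cexp ((riemannSiegelTheta t - t * Real.log k : ℝ) * I) := by
    rw [thetaPhase, cpow_def_of_ne_zero (Nat.cast_ne_zero.mpr hk), ← natCast_log, ofReal_exp,
      ← Complex.exp_add, ← Complex.exp_add]
    congr 1
    push_cast
    ring
  rw [polar, im_ofReal_mul, exp_ofReal_mul_I_im, inv_sqrt]

theorem hasDerivAt_natCast_cpow_critical_line {k : ℕ} (hk : k ≠ 0) (t : ℝ) :
    HasDerivAt (fun t : ℝ => (k : ℂ) ^ (-(1 / 2 + I * t)))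
      (-I * Real.log k * (k : ℂ) ^ (-(1 / 2 + I * t))) t := by
  refine (((hasDerivAt_neg' (1 / 2 + I * (t : ℂ))).const_cpow
    (Or.inl (Nat.cast_ne_zero.mpr hk))).comp t (hasDerivAt_critical_line t)).congr_deriv ?_
  rw [← natCast_log]
  ring

theorem hasDerivAt_thetaPhase_mul_natCast_cpow_re {k : ℕ} (hk : k ≠ 0) (t : ℝ) :
    HasDerivAt (fun t : ℝ => (thetaPhase t * (k : ℂ) ^ (-(1 / 2 + I * t))).re)
      (-(1 / Real.sqrt k * (thetaDeriv t - Real.log k) *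
        Real.sin (riemannSiegelTheta t - t * Real.log k))) t := by
  have product := (hasDerivAt_thetaPhase t).fun_mul (hasDerivAt_natCast_cpow_critical_line hk t)
  refine (reCLM.hasFDerivAt.comp_hasDerivAt t product).congr_deriv ?_
  have factored : I * thetaDeriv t * thetaPhase t * (k : ℂ) ^ (-(1 / 2 + I * t)) +
      thetaPhase t * (-I * Real.log k * (k : ℂ) ^ (-(1 / 2 + I * t))) =
        (thetaDeriv t - Real.log k : ℝ) *
          (I * (thetaPhase t * (k : ℂ) ^ (-(1 / 2 + I * t)))) := by
    push_cast
    ring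
  rw [reCLM_apply, factored, re_ofReal_mul, I_mul_re, thetaPhase_mul_natCast_cpow_im hk]
  ring

theorem hasDerivAt_thetaPhase_mul_riemannIntegral_re (N : ℕ) (t : ℝ) :
    HasDerivAt (fun t : ℝ => (thetaPhase t * riemannIntegral N (1 / 2 + I * t)).re)
      (thetaPhase t * (I * (thetaDeriv t * riemannIntegral N (1 / 2 + I * t) +
        riemannIntegralDeriv N (1 / 2 + I * t)))).re t := by
  have product := (hasDerivAt_thetaPhase t).fun_mul
    ((hasDerivAt_riemannIntegral N (1 / 2 + I * t)).comp t (hasDerivAt_critical_line t))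
  refine (reCLM.hasFDerivAt.comp_hasDerivAt t product).congr_deriv ?_
  rw [reCLM_apply]
  congr 1
  simp only [Function.comp_apply]
  ring

theorem hasDerivAt_hardyZ (N : ℕ) {t : ℝ} (ht : 0 < t) : HasDerivAt hardyZ
    (2 * (∑ k ∈ Finset.Ico 1 (N + 1), -(1 / Real.sqrt k * (thetaDeriv t - Real.log k) *
        Real.sin (riemannSiegelTheta t - t * Real.log k)) -
      (thetaPhase t * (I * (thetaDeriv t * riemannIntegral N (1 / 2 + I * t) +
        riemannIntegralDeriv N (1 / 2 + I * t)))).re)) t := by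
  have sum_deriv := HasDerivAt.fun_sum fun k (hk : k ∈ Finset.Ico 1 (N + 1)) =>
    hasDerivAt_thetaPhase_mul_natCast_cpow_re
      (Nat.one_le_iff_ne_zero.mp (Finset.mem_Ico.mp hk).1) t
  refine ((sum_deriv.fun_sub
    (hasDerivAt_thetaPhase_mul_riemannIntegral_re N t)).const_mul 2).congr_of_eventuallyEq ?_
  filter_upwards [lt_mem_nhds ht] with u hu
  rw [hardyZ_eq_riemannIntegral N hu, mul_sub, Finset.mul_sum, sub_re, re_sum]

theorem sum_inv_sqrt_le (N : ℕ) :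
    ∑ k ∈ Finset.Ico 1 (N + 1), 1 / Real.sqrt k ≤ 2 * Real.sqrt N := by
  induction N with
  | zero => simp
  | succ N ih =>
    rw [Finset.sum_Ico_succ_top (Nat.le_add_left 1 N)]
    have sqrt_pos : 0 < Real.sqrt (N + 1 : ℕ) := Real.sqrt_pos.mpr (Nat.cast_pos.mpr N.succ_pos)
    have sq_succ : Real.sqrt (N + 1 : ℕ) ^ 2 = N + 1 := by
      rw [Real.sq_sqrt (Nat.cast_nonneg _), Nat.cast_succ]
    have sq_sqrt : Real.sqrt N ^ 2 = N := Real.sq_sqrt N.cast_nonneg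
    have increment : 1 / Real.sqrt (N + 1 : ℕ) ≤ 2 * (Real.sqrt (N + 1 : ℕ) - Real.sqrt N) := by
      rw [div_le_iff₀ sqrt_pos]
      nlinarith [sq_nonneg (Real.sqrt (N + 1 : ℕ) - Real.sqrt N)]
    linarith

/-! ### Estimates on short intervals -/

theorem abs_sum_inv_sqrt_mul_sin_le (N : ℕ) (t d : ℝ) :
    |∑ k ∈ Finset.Ico 1 (N + 1), 1 / Real.sqrt k * d *
      Real.sin (riemannSiegelTheta t - t * Real.log k)| ≤ 2 * Real.sqrt N * |d| :=
  calc |∑ k ∈ Finset.Ico 1 (N + 1), 1 / Real.sqrt k * d *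
        Real.sin (riemannSiegelTheta t - t * Real.log k)| ≤
        ∑ k ∈ Finset.Ico 1 (N + 1), |1 / Real.sqrt k * d *
          Real.sin (riemannSiegelTheta t - t * Real.log k)| := Finset.abs_sum_le_sum_abs _ _
    _ ≤ ∑ k ∈ Finset.Ico 1 (N + 1), 1 / Real.sqrt k * |d| := by
        refine Finset.sum_le_sum fun k _ => ?_
        rw [abs_mul, abs_mul, abs_of_nonneg (one_div_nonneg.mpr (Real.sqrt_nonneg k))]
        exact mul_le_of_le_one_right (by positivity) (Real.abs_sin_le_one _)
    _ ≤ 2 * Real.sqrt N * |d| := by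
        rw [← Finset.sum_mul]
        exact mul_le_mul_of_nonneg_right (sum_inv_sqrt_le N) (abs_nonneg d)

theorem norm_thetaPhase_mul_le (t : ℝ) (J J' : ℂ) :
    ‖thetaPhase t * (I * (thetaDeriv t * J + J'))‖ ≤ |thetaDeriv t| * ‖J‖ + ‖J'‖ := by
  rw [norm_mul, norm_thetaPhase, one_mul, norm_mul, norm_I, one_mul]
  refine (norm_add_le _ _).trans_eq ?_
  rw [norm_mul, norm_real, Real.norm_eq_abs]

theorem abs_deriv_hardyZ_add_sum_le (N : ℕ) {t P : ℝ} (ht : 0 < t) (hP : 0 < P) :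
    |deriv hardyZ t + 2 * ∑ n ∈ Finset.Ico 1 (N + 1), 1 / Real.sqrt n * Real.log (P / n) *
        Real.sin (riemannSiegelTheta t - t * Real.log n)| ≤
      2 * (2 * Real.sqrt N * |thetaDeriv t - Real.log P|) +
        2 * (|thetaDeriv t| * ‖riemannIntegral N (1 / 2 + I * t)‖ +
          ‖riemannIntegralDeriv N (1 / 2 + I * t)‖) := by
  set remainder := thetaPhase t * (I * (thetaDeriv t * riemannIntegral N (1 / 2 + I * t) +
    riemannIntegralDeriv N (1 / 2 + I * t))) with remainder_def
  have sums_eq : ∑ n ∈ Finset.Ico 1 (N + 1), 1 / Real.sqrt n * (Real.log P - thetaDeriv t) *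
      Real.sin (riemannSiegelTheta t - t * Real.log n) =
        ∑ n ∈ Finset.Ico 1 (N + 1), -(1 / Real.sqrt n * (thetaDeriv t - Real.log n) *
          Real.sin (riemannSiegelTheta t - t * Real.log n)) +
        ∑ n ∈ Finset.Ico 1 (N + 1), 1 / Real.sqrt n * Real.log (P / n) *
          Real.sin (riemannSiegelTheta t - t * Real.log n) := by
    rw [← Finset.sum_add_distrib]
    refine Finset.sum_congr rfl fun n hn => ?_
    have n_ne : (n : ℝ) ≠ 0 :=
      Nat.cast_ne_zero.mpr (Nat.one_le_iff_ne_zero.mp (Finset.mem_Ico.mp hn).1)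
    rw [Real.log_div hP.ne' n_ne]
    ring
  have sum_bound := abs_sum_inv_sqrt_mul_sin_le N t (Real.log P - thetaDeriv t)
  rw [sums_eq, abs_sub_comm (Real.log P)] at sum_bound
  have remainder_bound : |remainder.re| ≤ |thetaDeriv t| * ‖riemannIntegral N (1 / 2 + I * t)‖ +
      ‖riemannIntegralDeriv N (1 / 2 + I * t)‖ :=
    (abs_re_le_norm _).trans (norm_thetaPhase_mul_le t _ _)
  rw [(hasDerivAt_hardyZ N ht).deriv, ← remainder_def, ← mul_add, sub_add_eq_add_sub, mul_sub]
  refine (abs_sub _ _).trans ?_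
  rw [abs_mul, abs_mul, abs_two]
  gcongr

theorem abs_sub_two_pi_mul_add_half_sq_le {N : ℕ} {P t : ℝ} (hN : N < P) (hP : P ≤ N + 1)
    (ht : t ∈ Icc (2 * Real.pi * P ^ 2) (2 * Real.pi * P ^ 2 + P)) :
    |t - 2 * Real.pi * ((N : ℝ) + 1 / 2) ^ 2| ≤ 12 * ((N : ℝ) + 1 / 2) := by
  have N_nonneg : (0 : ℝ) ≤ N := N.cast_nonneg
  have pi_le := Real.pi_lt_d2
  have P_close : |P ^ 2 - ((N : ℝ) + 1 / 2) ^ 2| ≤ (N : ℝ) + 3 / 4 :=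
    abs_le.mpr ⟨by nlinarith [N_nonneg], by nlinarith [N_nonneg]⟩
  calc |t - 2 * Real.pi * ((N : ℝ) + 1 / 2) ^ 2| ≤
        |t - 2 * Real.pi * P ^ 2| + |2 * Real.pi * P ^ 2 - 2 * Real.pi * (N + 1 / 2) ^ 2| :=
        abs_sub_le _ _ _
    _ = (t - 2 * Real.pi * P ^ 2) + 2 * Real.pi * |P ^ 2 - (N + 1 / 2) ^ 2| := by
        rw [abs_of_nonneg (sub_nonneg.mpr ht.1), ← mul_sub, abs_mul,
          abs_of_pos Real.two_pi_pos]
    _ ≤ P + 2 * 3.15 * (N + 3 / 4) := by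
        gcongr
        linarith [ht.2]
    _ ≤ 12 * (N + 1 / 2) := by linarith

theorem rpow_neg_half_le {q b : ℝ} (hq : 0 < q) (hb : q ^ 2 / 8 ≤ b) :
    (b / 2) ^ (-(1 / 2) : ℝ) ≤ 4 * q⁻¹ :=
  calc (b / 2) ^ (-(1 / 2) : ℝ) ≤ ((q / 4) ^ 2) ^ (-(1 / 2) : ℝ) :=
        Real.rpow_le_rpow_of_nonpos (by positivity) (by linarith) (by norm_num)
    _ = 4 * q⁻¹ := by
        rw [Real.rpow_neg (by positivity), ← Real.sqrt_eq_rpow, Real.sqrt_sq (by positivity),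
          inv_div, div_eq_mul_inv]

section

variable {q P t : ℝ} {N : ℕ}

theorem mem_Icc_of_two_pi_mul_sq_eq (hP : 0 ≤ P) (hPq : 2 * Real.pi * P ^ 2 = q ^ 4) :
    P ∈ Icc (q ^ 2 / 3) (q ^ 2) := by
  constructor
  · refine le_of_sq_le_sq ?_ hP
    nlinarith [Real.pi_lt_d2, sq_nonneg P]
  · refine le_of_sq_le_sq ?_ (sq_nonneg q)
    nlinarith [Real.pi_gt_three, sq_nonneg P]

theorem abs_thetaDeriv_sub_log_le (hq : 2 ≤ q) (hP : 0 < P) (hPq : 2 * Real.pi * P ^ 2 = q ^ 4)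
    (ht : t ∈ Icc (q ^ 4) (q ^ 4 + q)) : |thetaDeriv t - Real.log P| ≤ 6 * q⁻¹ ^ 3 := by
  have q_pos : 0 < q := two_pos.trans_le hq
  have t_pos : 0 < t := (pow_pos q_pos 4).trans_le ht.1
  have cancel : q⁻¹ ^ 3 * q ^ 4 = q := by field_simp
  have log_split : 1 / 2 * Real.log (t / (2 * Real.pi)) - Real.log P =
      1 / 2 * Real.log (t / q ^ 4) := by
    have quotient_eq : t / q ^ 4 = t / (2 * Real.pi) / P ^ 2 := by rw [← hPq, div_div]
    rw [quotient_eq, Real.log_div (x := t / (2 * Real.pi)) (by positivity) (by positivity),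
      Real.log_pow]
    push_cast
    ring
  have log_nonneg : 0 ≤ Real.log (t / q ^ 4) :=
    Real.log_nonneg ((one_le_div (by positivity)).mpr ht.1)
  have log_le : Real.log (t / q ^ 4) ≤ q⁻¹ ^ 3 := by
    refine (Real.log_le_sub_one_of_pos (by positivity)).trans ?_
    rw [div_sub_one (by positivity), div_le_iff₀ (by positivity), cancel]
    linarith [ht.2]
  have stirling_le : 5 / t ≤ 5 * q⁻¹ ^ 3 := by
    rw [div_le_iff₀ t_pos, mul_assoc]
    have one_le : 1 ≤ q⁻¹ ^ 3 * t :=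
      calc 1 ≤ q := by linarith
        _ = q⁻¹ ^ 3 * q ^ 4 := cancel.symm
        _ ≤ q⁻¹ ^ 3 * t := by
            gcongr
            exact ht.1
    linarith
  have four_le : 4 ≤ t := by nlinarith [ht.1, pow_le_pow_left₀ two_pos.le hq 4]
  calc |thetaDeriv t - Real.log P| ≤ |thetaDeriv t - 1 / 2 * Real.log (t / (2 * Real.pi))| +
        |1 / 2 * Real.log (t / (2 * Real.pi)) - Real.log P| := abs_sub_le _ _ _
    _ ≤ 5 * q⁻¹ ^ 3 + q⁻¹ ^ 3 := by
        refine add_le_add ((abs_thetaDeriv_sub_le four_le).trans stirling_le) ?_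
        rw [log_split, abs_of_nonneg (by positivity)]
        linarith
    _ = 6 * q⁻¹ ^ 3 := by ring

theorem norm_riemannIntegral_critical_line_le (hq : 0 < q) (hN : q ^ 2 / 8 ≤ N + 1 / 2)
    (ht : |t - 2 * Real.pi * ((N : ℝ) + 1 / 2) ^ 2| ≤ 12 * ((N : ℝ) + 1 / 2)) :
    ‖riemannIntegral N (1 / 2 + I * t)‖ ≤ 16 * q⁻¹ * Real.exp (24 ^ 2) := by
  have bound := norm_riemannIntegral_le (N := N) (s := 1 / 2 + I * t) (K := 12) (by simp)
    (by simpa using ht)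
  have re_eq : (1 / 2 + I * t : ℂ).re = 1 / 2 := by simp
  rw [re_eq] at bound
  calc ‖riemannIntegral N (1 / 2 + I * t)‖ ≤
        4 * (((N + 1 / 2) / 2) ^ (-(1 / 2) : ℝ) * Real.exp ((2 * 12) ^ 2)) := bound
    _ ≤ 4 * (4 * q⁻¹ * Real.exp ((2 * 12) ^ 2)) := by
        gcongr
        exact rpow_neg_half_le hq hN
    _ = 16 * q⁻¹ * Real.exp (24 ^ 2) := by
        norm_num
        ring

theorem norm_riemannIntegralDeriv_critical_line_le (hq : 0 < q) (hN : 1 ≤ N)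
    (hNq : q ^ 2 / 8 ≤ N + 1 / 2)
    (ht : |t - 2 * Real.pi * ((N : ℝ) + 1 / 2) ^ 2| ≤ 12 * ((N : ℝ) + 1 / 2)) :
    ‖riemannIntegralDeriv N (1 / 2 + I * t)‖ ≤
      16 * q⁻¹ * (Real.log (N + 1 / 2) + 5) * Real.exp (26 ^ 2) := by
  have bound := norm_riemannIntegralDeriv_le (s := 1 / 2 + I * t) (K := 12) hN (by simp)
    (by simpa using ht)
  have re_eq : (1 / 2 + I * t : ℂ).re = 1 / 2 := by simp
  rw [re_eq] at bound
  have log_nonneg : 0 ≤ Real.log (N + 1 / 2) := by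
    refine Real.log_nonneg ?_
    linarith [(Nat.one_le_cast (α := ℝ)).mpr hN]
  calc ‖riemannIntegralDeriv N (1 / 2 + I * t)‖ ≤ 4 * ((Real.log (N + 1 / 2) + 5) *
        ((N + 1 / 2) / 2) ^ (-(1 / 2) : ℝ) * Real.exp ((2 * 12 + 2) ^ 2)) := bound
    _ ≤ 4 * ((Real.log (N + 1 / 2) + 5) * (4 * q⁻¹) * Real.exp ((2 * 12 + 2) ^ 2)) := by
        gcongr
        exact rpow_neg_half_le hq hNq
    _ = 16 * q⁻¹ * (Real.log (N + 1 / 2) + 5) * Real.exp (26 ^ 2) := by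
        norm_num
        ring

theorem four_le_of_exp_three_le (hq : Real.exp 3 ≤ q) : 4 ≤ q := by
  linarith [Real.add_one_le_exp 3]

theorem three_le_log_of_exp_three_le (hq : Real.exp 3 ≤ q) : 3 ≤ Real.log q :=
  (Real.le_log_iff_exp_le ((Real.exp_pos 3).trans_le hq)).mpr hq

theorem abs_thetaDeriv_le_three_mul_log (hq : Real.exp 3 ≤ q) (hP : 0 < P)
    (hPq : 2 * Real.pi * P ^ 2 = q ^ 4) (ht : t ∈ Icc (q ^ 4) (q ^ 4 + q)) :
    |thetaDeriv t| ≤ 3 * Real.log q := by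
  have four_le := four_le_of_exp_three_le hq
  obtain ⟨le_P, P_le⟩ := mem_Icc_of_two_pi_mul_sq_eq hP.le hPq
  have log_P_nonneg : 0 ≤ Real.log P := Real.log_nonneg (by nlinarith)
  have log_P_le : Real.log P ≤ 2 * Real.log q := by
    simpa only [Real.log_pow, Nat.cast_ofNat] using Real.log_le_log hP P_le
  have inv_le : q⁻¹ ^ 3 ≤ 1 / 4 ^ 3 := by
    rw [inv_pow, ← one_div]
    gcongr
  calc |thetaDeriv t| = |(thetaDeriv t - Real.log P) + Real.log P| := by rw [sub_add_cancel]
    _ ≤ 6 * q⁻¹ ^ 3 + Real.log P := by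
        refine (abs_add_le _ _).trans ?_
        rw [abs_of_nonneg log_P_nonneg]
        gcongr
        exact abs_thetaDeriv_sub_log_le (by linarith) hP hPq ht
    _ ≤ 3 * Real.log q := by linarith [three_le_log_of_exp_three_le hq]

theorem sqrt_mul_abs_thetaDeriv_sub_log_le (hq : Real.exp 3 ≤ q) (hN : N < P)
    (hPq : 2 * Real.pi * P ^ 2 = q ^ 4) (ht : t ∈ Icc (q ^ 4) (q ^ 4 + q)) :
    Real.sqrt N * |thetaDeriv t - Real.log P| ≤ 6 * q⁻¹ * Real.log q := by
  have four_le := four_le_of_exp_three_le hq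
  have P_pos : 0 < P := N.cast_nonneg.trans_lt hN
  have sqrt_le : Real.sqrt N ≤ q := Real.sqrt_le_left (by linarith) |>.mpr
    (hN.le.trans (mem_Icc_of_two_pi_mul_sq_eq P_pos.le hPq).2)
  have inv_le : q⁻¹ ≤ Real.log q :=
    (inv_le_one_of_one_le₀ (by linarith)).trans (by linarith [three_le_log_of_exp_three_le hq])
  calc Real.sqrt N * |thetaDeriv t - Real.log P| ≤ q * (6 * q⁻¹ ^ 3) := by
        gcongr
        exact abs_thetaDeriv_sub_log_le (by linarith) P_pos hPq ht
    _ = 6 * q⁻¹ * q⁻¹ := by field_simp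
    _ ≤ 6 * q⁻¹ * Real.log q := by gcongr

theorem thetaDeriv_mul_riemannIntegral_add_le (hq : Real.exp 3 ≤ q) (hN : N < P)
    (hP : P ≤ N + 1) (hPq : 2 * Real.pi * P ^ 2 = q ^ 4) (ht : t ∈ Icc (q ^ 4) (q ^ 4 + q)) :
    |thetaDeriv t| * ‖riemannIntegral N (1 / 2 + I * t)‖ +
        ‖riemannIntegralDeriv N (1 / 2 + I * t)‖ ≤
      (48 * Real.exp (24 ^ 2) + 80 * Real.exp (26 ^ 2)) * q⁻¹ * Real.log q := by
  have four_le := four_le_of_exp_three_le hq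
  have three_le := three_le_log_of_exp_three_le hq
  have q_pos : 0 < q := by linarith
  have P_pos : 0 < P := N.cast_nonneg.trans_lt hN
  obtain ⟨le_P, P_le⟩ := mem_Icc_of_two_pi_mul_sq_eq P_pos.le hPq
  have le_N : q ^ 2 / 8 ≤ N + 1 / 2 := by nlinarith
  have N_ge : 1 ≤ N := Nat.cast_pos.mp (by nlinarith : (0 : ℝ) < N)
  have log_N_le : Real.log (N + 1 / 2) ≤ 3 * Real.log q := by
    refine (Real.log_le_log (by positivity) (?_ : _ ≤ q ^ 3)).trans_eq ?_
    · nlinarith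
    · rw [Real.log_pow, Nat.cast_ofNat]
  have near_saddle := abs_sub_two_pi_mul_add_half_sq_le hN hP
    (Icc_subset_Icc hPq.le (by rw [hPq]; nlinarith) ht)
  calc |thetaDeriv t| * ‖riemannIntegral N (1 / 2 + I * t)‖ +
        ‖riemannIntegralDeriv N (1 / 2 + I * t)‖ ≤
        3 * Real.log q * (16 * q⁻¹ * Real.exp (24 ^ 2)) +
          16 * q⁻¹ * (5 * Real.log q) * Real.exp (26 ^ 2) := by
        gcongr
        · exact abs_thetaDeriv_le_three_mul_log hq P_pos hPq ht
        · exact norm_riemannIntegral_critical_line_le q_pos le_N near_saddle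
        · refine (norm_riemannIntegralDeriv_critical_line_le q_pos N_ge le_N near_saddle).trans ?_
          gcongr
          linarith
    _ = _ := by ring

theorem abs_deriv_hardyZ_add_sum_le_of_mem_Icc (hq : Real.exp 3 ≤ q) (hN : N < P)
    (hP : P ≤ N + 1) (hPq : 2 * Real.pi * P ^ 2 = q ^ 4) (ht : t ∈ Icc (q ^ 4) (q ^ 4 + q)) :
    |deriv hardyZ t + 2 * ∑ n ∈ Finset.Ico 1 (N + 1), 1 / Real.sqrt n * Real.log (P / n) *
        Real.sin (riemannSiegelTheta t - t * Real.log n)| ≤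
      (24 + 96 * Real.exp (24 ^ 2) + 160 * Real.exp (26 ^ 2)) * q⁻¹ * Real.log q := by
  have t_pos : 0 < t := (pow_pos ((Real.exp_pos 3).trans_le hq) 4).trans_le ht.1
  linarith [abs_deriv_hardyZ_add_sum_le N t_pos (N.cast_nonneg.trans_lt hN),
    sqrt_mul_abs_thetaDeriv_sub_log_le hq hN hPq ht,
    thetaDeriv_mul_riemannIntegral_add_le hq hN hP hPq ht]

end

theorem rpow_quarter_pow_four {T : ℝ} (hT : 0 ≤ T) : (T ^ ((1 : ℝ) / 4)) ^ 4 = T := by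
  rw [← Real.rpow_mul_natCast hT]
  norm_num

theorem exp_three_le_rpow_quarter {T : ℝ} (hT : Real.exp 12 ≤ T) :
    Real.exp 3 ≤ T ^ ((1 : ℝ) / 4) := by
  refine le_trans (le_of_eq ?_) (Real.rpow_le_rpow (Real.exp_pos 12).le hT (by norm_num))
  rw [← Real.exp_mul]
  norm_num

end RiemannSiegel

/-- There are `C, T₀ > 0` such that for all `T ≥ T₀`, all `H ∈ (0, T^{1/4}]`,
and all `t ∈ [T, T+H]`, with `P₀ = √(T/(2π))`,
`|Z'(t) + 2 Σ_{n < P₀} n^{-1/2} ln(P₀/n) sin(ϑ(t) - t ln n)| ≤ C T^{-1/4} ln T`. -/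
theorem hardyZ_deriv_formula_two :
    ∃ C : ℝ, 0 < C ∧ ∃ T₀ : ℝ, 0 < T₀ ∧
      ∀ T : ℝ, T₀ ≤ T → ∀ H ∈ Set.Ioc (0 : ℝ) (T ^ ((1 : ℝ) / 4)),
        ∀ t ∈ Set.Icc T (T + H),
          |deriv hardyZ t +
            2 * ∑ n ∈ Finset.Ico 1 ⌈Real.sqrt (T / (2 * Real.pi))⌉₊,
              (1 / Real.sqrt n) * Real.log (Real.sqrt (T / (2 * Real.pi)) / n) *
                Real.sin (riemannSiegelTheta t - t * Real.log n)|
            ≤ C * T ^ (-(1 : ℝ) / 4) * Real.log T := by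
  refine ⟨6 + 24 * Real.exp (24 ^ 2) + 40 * Real.exp (26 ^ 2), by positivity, Real.exp 12,
    Real.exp_pos 12, fun T hT H hH t ht => ?_⟩
  have T_pos : 0 < T := (Real.exp_pos 12).trans_le hT
  set P := Real.sqrt (T / (2 * Real.pi))
  set q := T ^ ((1 : ℝ) / 4) with q_def
  have q_pow : q ^ 4 = T := RiemannSiegel.rpow_quarter_pow_four T_pos.le
  have P_sq : 2 * Real.pi * P ^ 2 = q ^ 4 := by
    rw [q_pow, Real.sq_sqrt (by positivity), mul_div_cancel₀ T Real.two_pi_pos.ne']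
  have P_pos : 0 < P := Real.sqrt_pos.mpr (by positivity)
  obtain ⟨N, ceil_eq⟩ := Nat.exists_eq_add_one.mpr (Nat.ceil_pos.mpr P_pos)
  have N_lt : N < P := Nat.lt_ceil.mp (ceil_eq ▸ N.lt_succ_self)
  have P_le : P ≤ N + 1 := by exact_mod_cast ceil_eq ▸ Nat.le_ceil P
  have bound := RiemannSiegel.abs_deriv_hardyZ_add_sum_le_of_mem_Icc
    (RiemannSiegel.exp_three_le_rpow_quarter hT) N_lt P_le P_sq
    (Set.Icc_subset_Icc q_pow.le (by linarith [hH.2]) ht)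
  have q_inv : T ^ (-(1 : ℝ) / 4) = q⁻¹ := by rw [neg_div, Real.rpow_neg T_pos.le]
  have log_q : Real.log q = Real.log T / 4 := by rw [q_def, Real.log_rpow T_pos]; ring
  rw [ceil_eq, q_inv]
  exact bound.trans_eq (by rw [log_q]; ring)
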